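/- arXiv:2604.13295 — 3 statements merged into one kernel-verified Lean document; each statement's English description precedes it below -/
import Mathlib

section
/- Let d ≥ 3 and let 0 < r < 2. For any fixed x ∈ S^{d−1}, the normalized surface measure μ_r of the spherical cap {y ∈ S^{d−1} : ‖y − x‖ ≤ r} satisfies μ_r ≤ √(d/(2π)) · (1/(d−1)) · (r/√(1 − r²/4))^{d−1}. -/
open MeasureTheory

noncomputable section

/-- The uniform (normalized surface) probability measure on the unit sphere in `ℝ^d`. -/
def sphereUniform (d : ℕ) : Measure (Metric.sphere (0 : EuclideanSpace ℝ (Fin d)) 1) :=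
  ((volume : Measure (EuclideanSpace ℝ (Fin d))).toSphere Set.univ)⁻¹ •
    (volume : Measure (EuclideanSpace ℝ (Fin d))).toSphere

/-!
Write `n = d - 1`, let `ωₖ` be the volume of the unit ball of `ℝᵏ` and `θ` the angular radius of
the cap, so that `1 - r² / 2 = cos θ`. Up to normalization the measure of the cap is the volume of
the cone `{(t, z) | a ‖z‖ ≤ t, t² + ‖z‖² < 1}` over it in `ℝ × ℝⁿ`, where
`a = cot θ = sinh (artanh (cos θ))`. Substituting `t = ‖z‖ s` and exchanging the integrals turns
this volume into `n / (n + 1) * ωₙ * ∫_a^∞ (1 + s²) ^ (-(n + 1) / 2) ds`.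

In `n` of the `n + 1` factors `(1 + s²) ^ (-1 / 2) = 1 / cosh (arsinh s)` of the integrand, bound
`1 / cosh (arsinh s)` by `2 e ^ (-arsinh s)`; the result is the derivative of
`-(2 e ^ (-arsinh s))ⁿ / n`. Moreover `2 e ^ (-arsinh a) = 2 tan (θ / 2) = r / √(1 - r² / 4)`, the
radius of the cap under stereographic projection. The cap thus has surface measure at most
`ωₙ (r / √(1 - r² / 4))ⁿ`, to be compared with the total `(n + 1) ωₙ₊₁`; the ratio of the two ball
volumes is controlled by the log-convexity of `Γ`.
-/

section Development

open Set Metric Module Real Filter Topology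
open scoped InnerProductSpace Pointwise

section HyperbolicTail

lemma inv_sqrt_one_add_sq_le_two_mul_exp_neg_arsinh (s : ℝ) :
    (√(1 + s ^ 2))⁻¹ ≤ 2 * exp (-arsinh s) := by
  rw [← cosh_arsinh, exp_neg, ← div_eq_mul_inv, inv_le_comm₀ (cosh_pos _) (by positivity),
    inv_div, cosh_eq]
  gcongr
  exact le_add_of_nonneg_right (exp_pos _).le

lemma hasDerivAt_two_mul_exp_neg_arsinh_pow_div {n : ℕ} (hn : n ≠ 0) (s : ℝ) :
    HasDerivAt (fun s ↦ (2 * exp (-arsinh s)) ^ n / n)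
      (-((2 * exp (-arsinh s)) ^ n * (√(1 + s ^ 2))⁻¹)) s := by
  have h := (((hasDerivAt_arsinh s).fun_neg.exp.const_mul 2).fun_pow n).div_const (n : ℝ)
  refine h.congr_deriv ?_
  obtain ⟨m, rfl⟩ := Nat.exists_eq_succ_of_ne_zero hn
  simp only [Nat.succ_eq_add_one, Nat.add_sub_cancel]
  field_simp
  ring

lemma tendsto_two_mul_exp_neg_arsinh_pow_div_atTop {n : ℕ} (hn : n ≠ 0) :
    Tendsto (fun s ↦ (2 * exp (-arsinh s)) ^ n / n) atTop (𝓝 0) := by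
  have harsinh : Tendsto arsinh atTop atTop := sinhOrderIso.symm.tendsto_atTop
  have hexp : Tendsto (fun s ↦ exp (-arsinh s)) atTop (𝓝 0) :=
    tendsto_exp_neg_atTop_nhds_zero.comp harsinh
  simpa [hn] using ((hexp.const_mul 2).pow n).div_const (n : ℝ)

lemma lintegral_Ioi_inv_sqrt_one_add_sq_pow_le {n : ℕ} (hn : n ≠ 0) (a : ℝ) :
    ∫⁻ s in Ioi a, ENNReal.ofReal ((√(1 + s ^ 2))⁻¹ ^ (n + 1)) ≤
      ENNReal.ofReal ((2 * exp (-arsinh a)) ^ n / n) := by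
  set g : ℝ → ℝ := fun s ↦ (2 * exp (-arsinh s)) ^ n / n
  set g' : ℝ → ℝ := fun s ↦ (2 * exp (-arsinh s)) ^ n * (√(1 + s ^ 2))⁻¹
  have hderiv : ∀ s ∈ Ici a, HasDerivAt g (-g' s) s := fun s _ ↦
    hasDerivAt_two_mul_exp_neg_arsinh_pow_div hn s
  have hnonneg : ∀ s, 0 ≤ g' s := fun s ↦ by positivity
  have hnonpos : ∀ s ∈ Ioi a, -g' s ≤ 0 := fun s _ ↦ neg_nonpos.2 (hnonneg s)
  have hlim : Tendsto g atTop (𝓝 0) := tendsto_two_mul_exp_neg_arsinh_pow_div_atTop hn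
  have hint : IntegrableOn g' (Ioi a) := by
    simpa using (integrableOn_Ioi_deriv_of_nonpos' hderiv hnonpos hlim).neg
  have hval : ∫ s in Ioi a, g' s = g a := by
    simpa [integral_neg] using integral_Ioi_of_hasDerivAt_of_nonpos' hderiv hnonpos hlim
  calc ∫⁻ s in Ioi a, ENNReal.ofReal ((√(1 + s ^ 2))⁻¹ ^ (n + 1))
      ≤ ∫⁻ s in Ioi a, ENNReal.ofReal (g' s) := by
        refine lintegral_mono fun s ↦ ENNReal.ofReal_le_ofReal ?_
        rw [pow_succ]
        dsimp only [g']
        gcongr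
        exact inv_sqrt_one_add_sq_le_two_mul_exp_neg_arsinh s
    _ = ENNReal.ofReal (g a) := by
        rw [← ofReal_integral_eq_lintegral_ofReal hint (ae_of_all _ hnonneg), hval]

end HyperbolicTail

section Sector

lemma lintegral_prod_eq_lintegral_enorm_mul {α : Type*} [MeasurableSpace α] {μ : Measure α}
    [SFinite μ] {g : α → ℝ} (hg : Measurable g) (hg0 : ∀ᵐ z ∂μ, g z ≠ 0)
    {f : ℝ × α → ENNReal} (hf : Measurable f) :
    ∫⁻ p, f p ∂(volume.prod μ) =
      ∫⁻ p, ‖g p.2‖ₑ * f (g p.2 * p.1, p.2) ∂(volume.prod μ) := by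
  rw [lintegral_prod_symm _ hf.aemeasurable,
    lintegral_prod_symm _ (by fun_prop : Measurable _).aemeasurable]
  refine lintegral_congr_ae (hg0.mono fun z hz ↦ ?_)
  dsimp only
  conv_lhs => rw [← Real.smul_map_volume_mul_left hz]
  rw [lintegral_smul_measure, lintegral_map (by fun_prop) (by fun_prop),
    lintegral_const_mul _ (by fun_prop), Real.enorm_eq_ofReal_abs, smul_eq_mul]

variable {F : Type*} [NormedAddCommGroup F]

variable (F) in
/-- The part of the unit ball of `ℝ × F` (for the `L²` norm) lying in the circular cone around
the first axis whose half-angle has cotangent `a`. For `F = {x}ᗮ` this is, up to a null set,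
the cone from the origin over a spherical cap with centre `x`. -/
def sphericalSector (a : ℝ) : Set (ℝ × F) :=
  {p | a * ‖p.2‖ ≤ p.1 ∧ p.1 ^ 2 + ‖p.2‖ ^ 2 < 1}

lemma norm_mul_mem_sphericalSector_iff {a s : ℝ} {z : F} (hz : z ≠ 0) :
    (‖z‖ * s, z) ∈ sphericalSector F a ↔ a ≤ s ∧ z ∈ ball 0 (√(1 + s ^ 2))⁻¹ := by
  have hz' : 0 < ‖z‖ := norm_pos_iff.2 hz
  have hfactor : (‖z‖ * s) ^ 2 + ‖z‖ ^ 2 = (√(1 + s ^ 2) * ‖z‖) ^ 2 := by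
    rw [mul_pow √_, sq_sqrt (by positivity)]
    ring
  simp only [sphericalSector, mem_ofPred_eq, hfactor,
    sq_lt_one_iff₀ (by positivity : 0 ≤ √(1 + s ^ 2) * ‖z‖), mul_comm a,
    mul_le_mul_iff_right₀ hz', mem_ball_zero_iff, ← one_div,
    lt_div_iff₀ (by positivity : 0 < √(1 + s ^ 2)), mul_comm ‖z‖ √_]

variable [MeasurableSpace F] [BorelSpace F]

lemma measurableSet_sphericalSector (a : ℝ) : MeasurableSet (sphericalSector F a) := by
  have hcone : MeasurableSet {p : ℝ × F | a * ‖p.2‖ ≤ p.1} :=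
    measurableSet_le (by fun_prop) (by fun_prop)
  have hball : MeasurableSet {p : ℝ × F | p.1 ^ 2 + ‖p.2‖ ^ 2 < 1} :=
    measurableSet_lt (by fun_prop) (by fun_prop)
  exact hcone.inter hball

lemma prod_sphericalSector_eq_lintegral {μ : Measure F} [SFinite μ] [NullSingletonClass μ] (a : ℝ) :
    (volume.prod μ) (sphericalSector F a) =
      ∫⁻ s in Ici a, ∫⁻ z in ball 0 (√(1 + s ^ 2))⁻¹, ‖z‖ₑ ∂μ := by
  have hmeas := measurableSet_sphericalSector (F := F) a
  have hone : Measurable ((sphericalSector F a).indicator (1 : ℝ × F → ENNReal)) :=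
    measurable_one.indicator hmeas
  rw [← lintegral_indicator_one hmeas, lintegral_prod_eq_lintegral_enorm_mul measurable_norm
      (μ.ae_ne 0 |>.mono fun z hz ↦ norm_ne_zero_iff.2 hz) hone,
    lintegral_prod _ (by fun_prop), ← lintegral_indicator measurableSet_Ici]
  refine lintegral_congr fun s ↦ ?_
  by_cases hs : s ∈ Ici a
  · rw [indicator_of_mem hs, ← lintegral_indicator measurableSet_ball]
    refine lintegral_congr fun z ↦ ?_
    rcases eq_or_ne z 0 with rfl | hz
    · simp [indicator]
    · simp [indicator, norm_mul_mem_sphericalSector_iff hz, mem_Ici.1 hs]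
  · rw [indicator_of_notMem hs, lintegral_eq_zero_iff (by fun_prop)]
    refine ae_of_all _ fun z ↦ ?_
    rcases eq_or_ne z 0 with rfl | hz
    · simp
    · simp [norm_mul_mem_sphericalSector_iff hz, mem_Ici.not.1 hs]

variable [NormedSpace ℝ F] [FiniteDimensional ℝ F] [Nontrivial F] (μ : Measure F)
  [μ.IsAddHaarMeasure]

lemma setIntegral_norm_ball {ρ : ℝ} (hρ : 0 ≤ ρ) :
    ∫ z in ball 0 ρ, ‖z‖ ∂μ =
      finrank ℝ F / (finrank ℝ F + 1) * μ.real (ball 0 1) * ρ ^ (finrank ℝ F + 1) := by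
  have hradial : (ball (0 : F) ρ).indicator norm = fun z ↦ (Iio ρ).indicator id ‖z‖ := by
    ext z
    simp [indicator]
  have hpolar (y : ℝ) : y ^ (finrank ℝ F - 1) • (Iio ρ).indicator id y =
      (Iio ρ).indicator (· ^ finrank ℝ F) y := by
    by_cases hy : y ∈ Iio ρ
    · simp [hy, pow_sub_one_mul finrank_pos.ne']
    · simp [hy]
  have hmoment : ∫ y in Ioi 0, (Iio ρ).indicator (· ^ finrank ℝ F) y =
      ρ ^ (finrank ℝ F + 1) / (finrank ℝ F + 1) := by
    rw [setIntegral_indicator measurableSet_Iio, Ioi_inter_Iio, ← integral_Ioc_eq_integral_Ioo,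
      ← intervalIntegral.integral_of_le hρ, integral_pow]
    simp
  rw [← integral_indicator measurableSet_ball, hradial, integral_fun_norm_addHaar]
  simp only [hpolar, hmoment, nsmul_eq_mul, smul_eq_mul]
  ring

lemma setLIntegral_enorm_ball {ρ : ℝ} (hρ : 0 ≤ ρ) :
    ∫⁻ z in ball 0 ρ, ‖z‖ₑ ∂μ = ENNReal.ofReal
      (finrank ℝ F / (finrank ℝ F + 1) * μ.real (ball 0 1) * ρ ^ (finrank ℝ F + 1)) := by
  have hint : IntegrableOn (fun z : F ↦ z) (ball 0 ρ) μ :=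
    (continuous_id.continuousOn.integrableOn_compact (isCompact_closedBall 0 ρ)).mono_set
      ball_subset_closedBall
  rw [← setIntegral_norm_ball μ hρ, ofReal_integral_norm_eq_lintegral_enorm hint]

lemma prod_sphericalSector_le (a : ℝ) :
    (volume.prod μ) (sphericalSector F a) ≤ ENNReal.ofReal
      (μ.real (ball 0 1) / (finrank ℝ F + 1) * (2 * exp (-arsinh a)) ^ finrank ℝ F) := by
  have hn : finrank ℝ F ≠ 0 := finrank_pos.ne'
  set C : ℝ := finrank ℝ F / (finrank ℝ F + 1) * μ.real (ball 0 1)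
  have hC : 0 ≤ C := by positivity
  calc (volume.prod μ) (sphericalSector F a)
      = ∫⁻ s in Ioi a, ENNReal.ofReal C *
          ENNReal.ofReal ((√(1 + s ^ 2))⁻¹ ^ (finrank ℝ F + 1)) := by
        rw [prod_sphericalSector_eq_lintegral, restrict_Ioi_eq_restrict_Ici]
        refine lintegral_congr fun s ↦ ?_
        rw [setLIntegral_enorm_ball μ (by positivity), ENNReal.ofReal_mul hC]
    _ ≤ ENNReal.ofReal C * ENNReal.ofReal ((2 * exp (-arsinh a)) ^ finrank ℝ F / finrank ℝ F) := by
        rw [lintegral_const_mul' _ _ ENNReal.ofReal_ne_top]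
        gcongr
        exact lintegral_Ioi_inv_sqrt_one_add_sq_pow_le hn a
    _ = _ := by
        rw [← ENNReal.ofReal_mul hC]
        congr 1
        simp only [C]
        field_simp

end Sector

section VolumeOfBalls

lemma Gamma_add_half_le_Gamma_mul_sqrt {x : ℝ} (hx : 0 < x) : Gamma (x + 1 / 2) ≤ Gamma x * √x := by
  have hG : 0 < Gamma x := Gamma_pos_of_pos hx
  calc Gamma (x + 1 / 2)
      = Gamma (1 / 2 * x + 1 / 2 * (x + 1)) := by ring_nf
    _ ≤ Gamma x ^ (1 / 2 : ℝ) * Gamma (x + 1) ^ (1 / 2 : ℝ) :=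
        Gamma_mul_add_mul_le_rpow_Gamma_mul_rpow_Gamma hx (by positivity) (by norm_num)
          (by norm_num) (by norm_num)
    _ = √(Gamma x ^ 2 * x) := by
        rw [← sqrt_eq_rpow, ← sqrt_eq_rpow, ← sqrt_mul hG.le, Gamma_add_one hx.ne']
        ring_nf
    _ = Gamma x * √x := by rw [sqrt_mul (sq_nonneg _), sqrt_sq hG.le]

variable {E F : Type*} [NormedAddCommGroup E] [InnerProductSpace ℝ E] [FiniteDimensional ℝ E]
  [MeasurableSpace E] [BorelSpace E] [NormedAddCommGroup F] [InnerProductSpace ℝ F]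
  [FiniteDimensional ℝ F] [MeasurableSpace F] [BorelSpace F]

lemma finrank_mul_volume_real_ball [Nontrivial E] :
    finrank ℝ E * volume.real (ball (0 : E) 1) =
      2 * √π ^ finrank ℝ E / Gamma (finrank ℝ E / 2) := by
  have hn : (0 : ℝ) < finrank ℝ E := by exact_mod_cast finrank_pos (R := ℝ) (M := E)
  rw [Measure.real, InnerProductSpace.volume_ball, Gamma_add_one (by positivity),
    ENNReal.ofReal_one, one_pow, one_mul, ENNReal.toReal_ofReal (by positivity)]
  field_simp

lemma finrank_mul_volume_real_ball_le [Nontrivial F] (h : finrank ℝ E = finrank ℝ F + 1) :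
    finrank ℝ F * volume.real (ball (0 : F) 1) ≤
      √(finrank ℝ F / (2 * π)) * (finrank ℝ E * volume.real (ball (0 : E) 1)) := by
  have : Nontrivial E := nontrivial_of_finrank_pos (R := ℝ) (by omega)
  have hn : (0 : ℝ) < finrank ℝ F := by exact_mod_cast finrank_pos (R := ℝ) (M := F)
  rw [finrank_mul_volume_real_ball, finrank_mul_volume_real_ball, h]
  set x : ℝ := finrank ℝ F / 2
  have hx : 0 < x := by positivity
  have hG : 0 < Gamma x := Gamma_pos_of_pos hx
  have hG' : 0 < Gamma (x + 1 / 2) := Gamma_pos_of_pos (by positivity)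
  have hsqrt : √(finrank ℝ F / (2 * π)) * √π = √x := by
    rw [← sqrt_mul (by positivity)]
    congr 1
    simp only [x]
    field_simp
  have hcast : ((finrank ℝ F + 1 : ℕ) : ℝ) / 2 = x + 1 / 2 := by push_cast; ring
  calc 2 * √π ^ finrank ℝ F / Gamma x
      ≤ 2 * √π ^ finrank ℝ F * √x / Gamma (x + 1 / 2) := by
        rw [div_le_div_iff₀ hG hG', mul_assoc _ √x, mul_comm √x]
        gcongr
        exact Gamma_add_half_le_Gamma_mul_sqrt hx
    _ = _ := by
        rw [hcast, ← hsqrt]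
        ring

end VolumeOfBalls

section Cap

lemma sinh_artanh_mul_sqrt_one_sub_sq_le {c u : ℝ} (hc : c ∈ Ioo (-1) 1) (hcu : c ≤ u)
    (hu : u ≤ 1) : sinh (artanh c) * √(1 - u ^ 2) ≤ u := by
  rcases hu.eq_or_lt with rfl | hu
  · simp
  have hu' : u ∈ Ioo (-1) 1 := ⟨hc.1.trans_le hcu, hu⟩
  have hsqrt : 0 < √(1 - u ^ 2) := sqrt_pos.2 (by nlinarith [hu'.1, hu'.2])
  rw [← le_div_iff₀ hsqrt, ← sinh_artanh hu', sinh_le_sinh]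
  exact artanh_le_artanh hc.1 hu hcu

variable {E : Type*} [NormedAddCommGroup E] [InnerProductSpace ℝ E]

lemma norm_sub_le_iff_le_inner {x y : E} (hx : ‖x‖ = 1) (hy : ‖y‖ = 1) {r : ℝ} (hr : 0 ≤ r) :
    ‖y - x‖ ≤ r ↔ 1 - r ^ 2 / 2 ≤ ⟪x, y⟫_ℝ := by
  have h := norm_sub_sq_real y x
  rw [hx, hy, real_inner_comm] at h
  rw [← sq_le_sq₀ (norm_nonneg _) hr, h]
  constructor <;> intro <;> linarith

/-- Cylindrical coordinates on `E` around the axis spanned by a unit vector `x`: the height over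
the hyperplane `{x}ᗮ` and the orthogonal projection to that hyperplane. The codomain carries the
sup norm, so this is not an isometry. -/
def axialCoordinates (x : E) : E →L[ℝ] ℝ × (ℝ ∙ x)ᗮ :=
  (innerSL ℝ x).prod (ℝ ∙ x)ᗮ.orthogonalProjectionOnto

lemma toSpanUnitSingleton_symm_orthogonalProjectionOnto {x : E} (hx : ‖x‖ = 1) (y : E) :
    (LinearIsometryEquiv.toSpanUnitSingleton (𝕜 := ℝ) x hx).symm
      ((ℝ ∙ x).orthogonalProjectionOnto y) = ⟪x, y⟫_ℝ := by
  rw [LinearIsometryEquiv.symm_apply_eq, LinearIsometryEquiv.toSpanUnitSingleton_apply]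
  exact Subtype.ext (Submodule.starProjection_unit_singleton ℝ hx y)

lemma norm_sq_axialCoordinates {x : E} (hx : ‖x‖ = 1) (y : E) :
    (axialCoordinates x y).1 ^ 2 + ‖(axialCoordinates x y).2‖ ^ 2 = ‖y‖ ^ 2 := by
  rw [Submodule.norm_sq_eq_add_norm_sq_projection y (ℝ ∙ x),
    ← (LinearIsometryEquiv.toSpanUnitSingleton (𝕜 := ℝ) x hx).symm.norm_map,
    toSpanUnitSingleton_symm_orthogonalProjectionOnto hx, norm_eq_abs, sq_abs]
  rfl

lemma smul_cap_subset_preimage_sphericalSector {x : E} (hx : ‖x‖ = 1) {c : ℝ}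
    (hc : c ∈ Ioo (-1) 1) :
    Ioo (0 : ℝ) 1 • ((↑) '' {y : sphere (0 : E) 1 | c ≤ ⟪x, y⟫_ℝ} : Set E) ⊆
      axialCoordinates x ⁻¹' sphericalSector (ℝ ∙ x)ᗮ (sinh (artanh c)) := by
  rintro _ ⟨k, ⟨hk0, hk1⟩, _, ⟨y, hy, rfl⟩, rfl⟩
  have hy1 : ‖(y : E)‖ = 1 := norm_eq_of_mem_sphere y
  have hnorm := norm_sq_axialCoordinates hx (y : E)
  rw [hy1] at hnorm
  set u := (axialCoordinates x y).1
  set z := (axialCoordinates x y).2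
  have hz : ‖z‖ = √(1 - u ^ 2) := by
    rw [← sqrt_sq (norm_nonneg z)]
    congr 1
    linarith
  have hu : u ≤ 1 := by nlinarith [sq_nonneg ‖z‖]
  have hcoord : axialCoordinates x (k • (y : E)) = (k * u, k • z) := map_smul _ _ _
  simp only [mem_preimage, hcoord, sphericalSector, mem_ofPred_eq, norm_smul,
    norm_of_nonneg hk0.le]
  constructor
  · rw [mul_left_comm, hz]
    gcongr
    exact sinh_artanh_mul_sqrt_one_sub_sq_le hc hy hu
  · calc (k * u) ^ 2 + (k * ‖z‖) ^ 2 = k ^ 2 := by linear_combination k ^ 2 * hnorm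
      _ < 1 := pow_lt_one₀ hk0.le hk1 two_ne_zero

variable [FiniteDimensional ℝ E]

lemma finrank_eq_finrank_orthogonal_span_singleton_add_one {x : E} (hx : x ≠ 0) :
    finrank ℝ E = finrank ℝ (ℝ ∙ x)ᗮ + 1 := by
  rw [← (ℝ ∙ x).finrank_add_finrank_orthogonal, finrank_span_singleton hx, add_comm]

variable [MeasurableSpace E] [BorelSpace E]

lemma measurePreserving_axialCoordinates {x : E} (hx : ‖x‖ = 1) :
    MeasurePreserving (axialCoordinates x) := by
  have haxis := (LinearIsometryEquiv.toSpanUnitSingleton (𝕜 := ℝ) x hx).symm.measurePreserving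
  have hsplit := (WithLp.volume_preserving_ofLp _ _).comp
    (ℝ ∙ x).orthogonalDecomposition.measurePreserving
  have hcoord : Prod.map (LinearIsometryEquiv.toSpanUnitSingleton (𝕜 := ℝ) x hx).symm id ∘
      WithLp.ofLp ∘ (ℝ ∙ x).orthogonalDecomposition = axialCoordinates x := by
    ext1 y
    simp [toSpanUnitSingleton_symm_orthogonalProjectionOnto, axialCoordinates]
  exact hcoord ▸ (haxis.prod (.id volume)).comp hsplit

lemma toSphere_real_setOf_le_inner_le (hE : 2 ≤ finrank ℝ E) (x : sphere (0 : E) 1) {c : ℝ}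
    (hc : c ∈ Ioo (-1) 1) :
    (volume : Measure E).toSphere.real {y | c ≤ ⟪(x : E), y⟫_ℝ} ≤
      volume.real (ball (0 : (ℝ ∙ (x : E))ᗮ) 1) *
        (2 * √((1 - c) / (1 + c))) ^ (finrank ℝ E - 1) := by
  have hx : ‖(x : E)‖ = 1 := norm_eq_of_mem_sphere x
  have hfinrank := finrank_eq_finrank_orthogonal_span_singleton_add_one
    (ne_zero_of_mem_unit_sphere x)
  have : Nontrivial (ℝ ∙ (x : E))ᗮ := nontrivial_of_finrank_pos (R := ℝ) (by omega)
  have hcap : MeasurableSet {y : sphere (0 : E) 1 | c ≤ ⟪(x : E), y⟫_ℝ} :=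
    measurableSet_le (by fun_prop) (by fun_prop)
  have hexp : 2 * exp (-arsinh (sinh (artanh c))) = 2 * √((1 - c) / (1 + c)) := by
    rw [arsinh_sinh, exp_neg, exp_artanh hc, ← sqrt_inv, inv_div]
  refine ENNReal.toReal_le_of_le_ofReal (by positivity) ?_
  calc (volume : Measure E).toSphere {y | c ≤ ⟪(x : E), y⟫_ℝ}
      ≤ finrank ℝ E * volume (axialCoordinates (x : E) ⁻¹'
          sphericalSector (ℝ ∙ (x : E))ᗮ (sinh (artanh c))) := by
        rw [Measure.toSphere_apply' _ hcap]
        gcongr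
        exact smul_cap_subset_preimage_sphericalSector hx hc
    _ = finrank ℝ E * volume (sphericalSector (ℝ ∙ (x : E))ᗮ (sinh (artanh c))) := by
        rw [(measurePreserving_axialCoordinates hx).measure_preimage
          (measurableSet_sphericalSector _).nullMeasurableSet]
    _ ≤ finrank ℝ E * ENNReal.ofReal (volume.real (ball (0 : (ℝ ∙ (x : E))ᗮ) 1) /
          (finrank ℝ (ℝ ∙ (x : E))ᗮ + 1) *
            (2 * √((1 - c) / (1 + c))) ^ finrank ℝ (ℝ ∙ (x : E))ᗮ) := by
        gcongr
        exact hexp ▸ prod_sphericalSector_le volume _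
    _ = _ := by
        rw [← ENNReal.ofReal_natCast, ← ENNReal.ofReal_mul (by positivity), hfinrank,
          Nat.add_sub_cancel]
        congr 1
        push_cast
        field_simp

lemma two_mul_sqrt_one_sub_div_one_add_eq {r : ℝ} (hr : 0 ≤ r) (hr2 : r < 2) :
    2 * √((1 - (1 - r ^ 2 / 2)) / (1 + (1 - r ^ 2 / 2))) = r / √(1 - r ^ 2 / 4) := by
  have h : 0 < 1 - r ^ 2 / 4 := by nlinarith
  have hquot : (1 - (1 - r ^ 2 / 2)) / (1 + (1 - r ^ 2 / 2)) = (r / 2) ^ 2 / (1 - r ^ 2 / 4) := by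
    rw [div_eq_div_iff (by nlinarith) h.ne']
    ring
  rw [hquot, sqrt_div (sq_nonneg _), sqrt_sq (by positivity)]
  ring

lemma toSphere_real_setOf_norm_sub_le_le (hE : 2 ≤ finrank ℝ E) {r : ℝ} (hr : 0 < r) (hr2 : r < 2)
    (x : sphere (0 : E) 1) :
    (volume : Measure E).toSphere.real {y | ‖(y : E) - x‖ ≤ r} ≤
      volume.real (ball (0 : (ℝ ∙ (x : E))ᗮ) 1) * (r / √(1 - r ^ 2 / 4)) ^ (finrank ℝ E - 1) := by
  have hcap : {y : sphere (0 : E) 1 | ‖(y : E) - x‖ ≤ r} =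
      {y : sphere (0 : E) 1 | 1 - r ^ 2 / 2 ≤ ⟪(x : E), y⟫_ℝ} := by
    ext y
    exact norm_sub_le_iff_le_inner (norm_eq_of_mem_sphere x) (norm_eq_of_mem_sphere y) hr.le
  rw [hcap, ← two_mul_sqrt_one_sub_div_one_add_eq hr.le hr2]
  exact toSphere_real_setOf_le_inner_le hE x ⟨by nlinarith, by nlinarith⟩

theorem stmt2_general (hE : 2 ≤ finrank ℝ E) {r : ℝ} (hr : 0 < r) (hr2 : r < 2)
    (x : sphere (0 : E) 1) :
    (volume : Measure E).toSphere {y | ‖(y : E) - x‖ ≤ r} / (volume : Measure E).toSphere univ ≤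
      ENNReal.ofReal (√(finrank ℝ E / (2 * π)) * (1 / (finrank ℝ E - 1)) *
        (r / √(1 - r ^ 2 / 4)) ^ (finrank ℝ E - 1)) := by
  have hfinrank := finrank_eq_finrank_orthogonal_span_singleton_add_one
    (ne_zero_of_mem_unit_sphere x)
  have : Nontrivial (ℝ ∙ (x : E))ᗮ := nontrivial_of_finrank_pos (R := ℝ) (by omega)
  have hn : (0 : ℝ) < finrank ℝ (ℝ ∙ (x : E))ᗮ := by exact_mod_cast finrank_pos
  have hcast : (finrank ℝ E : ℝ) - 1 = finrank ℝ (ℝ ∙ (x : E))ᗮ := by rw [hfinrank]; simp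
  have hcap := toSphere_real_setOf_norm_sub_le_le hE hr hr2 x
  have hball := finrank_mul_volume_real_ball_le (E := E) (F := (ℝ ∙ (x : E))ᗮ) hfinrank
  rw [← Measure.toSphere_real_apply_univ (volume : Measure E)] at hball
  set n := finrank ℝ (ℝ ∙ (x : E))ᗮ
  set ω := volume.real (ball (0 : (ℝ ∙ (x : E))ᗮ) 1)
  set ρ := r / √(1 - r ^ 2 / 4)
  set σ := (volume : Measure E).toSphere
  have harea : n * ω ≤ √(finrank ℝ E / (2 * π)) * σ.real univ :=
    hball.trans (by gcongr; omega)
  rw [hcast]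
  refine ENNReal.div_le_of_le_mul ?_
  rw [← ofReal_measureReal, ← ofReal_measureReal, ← ENNReal.ofReal_mul (by positivity)]
  refine ENNReal.ofReal_le_ofReal ?_
  calc σ.real {y | ‖(y : E) - x‖ ≤ r}
      ≤ ω * ρ ^ (finrank ℝ E - 1) := hcap
    _ = 1 / n * (n * ω) * ρ ^ (finrank ℝ E - 1) := by field_simp
    _ ≤ 1 / n * (√(finrank ℝ E / (2 * π)) * σ.real univ) * ρ ^ (finrank ℝ E - 1) := by
        gcongr 1 / n * ?_ * _
    _ = √(finrank ℝ E / (2 * π)) * (1 / n) * ρ ^ (finrank ℝ E - 1) * σ.real univ := by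
        ring

end Cap

end Development

/-- for `d ≥ 3` and `0 < r < 2`, the normalized surface measure of the spherical
cap of (Euclidean) radius `r` around any `x ∈ S^{d-1}` is at most
`√(d/(2π)) · (1/(d-1)) · (r/√(1 - r²/4))^{d-1}`. -/
theorem stmt2 (d : ℕ) (hd : 3 ≤ d) (r : ℝ) (hr : 0 < r) (hr2 : r < 2)
    (x : Metric.sphere (0 : EuclideanSpace ℝ (Fin d)) 1) :
    sphereUniform d {y : Metric.sphere (0 : EuclideanSpace ℝ (Fin d)) 1 |
        ‖(y : EuclideanSpace ℝ (Fin d)) - (x : EuclideanSpace ℝ (Fin d))‖ ≤ r} ≤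
      ENNReal.ofReal (Real.sqrt (d / (2 * Real.pi)) * (1 / (d - 1 : ℝ)) *
        (r / Real.sqrt (1 - r ^ 2 / 4)) ^ (d - 1)) := by
  simpa [sphereUniform, ENNReal.div_eq_inv_mul] using
    stmt2_general (by simp; omega) hr hr2 x

end
end

section
/- Fix σ > 0. For each n, let the dataset be X = {e_1, …, e_n, 2e_{n+1}, …, 2e_{2n}} ⊂ ℝ^{2n}, where e_1, …, e_{2n} is the standard orthonormal basis, and form the t-SNE input distribution P on unordered pairs of the 2n points using all bandwidths σ_i = σ. Then there exists a constant c > 0 such that for all sufficiently large n and every choice of embedding points y_1, …, y_{2n} ∈ ℝ², the t-SNE objective satisfies D(P‖Q) ≥ c. -/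
open MeasureTheory Filter Finset

noncomputable section

/-- t-SNE conditional probability `p_{j|i}`. -/
def pcond {N d : ℕ} (x : Fin N → EuclideanSpace ℝ (Fin d)) (σ : Fin N → ℝ) (i j : Fin N) : ℝ :=
  Real.exp (-‖x i - x j‖ ^ 2 / (2 * σ i ^ 2)) /
    ∑ k ∈ Finset.univ.erase i, Real.exp (-‖x i - x k‖ ^ 2 / (2 * σ i ^ 2))

/-- t-SNE pair probability `p_{ij} = (p_{i|j} + p_{j|i})/N`. -/
def pmat {N d : ℕ} (x : Fin N → EuclideanSpace ℝ (Fin d)) (σ : Fin N → ℝ) (i j : Fin N) : ℝ :=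
  (pcond x σ j i + pcond x σ i j) / N

/-- Normalization constant `Z` of the t-SNE output similarities. -/
def Zsum {N s : ℕ} (y : Fin N → EuclideanSpace ℝ (Fin s)) : ℝ :=
  ∑ i, ∑ j, if i < j then (1 + ‖y i - y j‖ ^ 2)⁻¹ else 0

/-- t-SNE output pair probability `q_{ij}`. -/
def qmat {N s : ℕ} (y : Fin N → EuclideanSpace ℝ (Fin s)) (i j : Fin N) : ℝ :=
  (1 + ‖y i - y j‖ ^ 2)⁻¹ / Zsum y

/-- KL divergence between two arrays indexed by unordered pairs `{i,j}`, `i < j`. -/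
def KLpairs {N : ℕ} (p q : Fin N → Fin N → ℝ) : ℝ :=
  ∑ i, ∑ j, if i < j then p i j * Real.log (p i j / q i j) else 0

/-- The doubled orthogonal frame `{e_1, …, e_n, 2e_{n+1}, …, 2e_{2n}} ⊂ ℝ^{2n}`. -/
def doubledFrame (n : ℕ) : Fin (2 * n) → EuclideanSpace ℝ (Fin (2 * n)) :=
  fun i => (if (i : ℕ) < n then (1 : ℝ) else 2) • EuclideanSpace.single i (1 : ℝ)

/-!
Since `1 / q_{ij}` is affine in `‖y i - y j‖²`, for every `t ≥ 0` the matrix `exp (-t / q_{ij})` is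
a multiple of a Gaussian kernel, hence positive semidefinite. The map `z ↦ exp (-t / z)` is
Lipschitz with constant `2 / t`, so by Pinsker's inequality the quadratic form of
`exp (-t / p_{ij})` on sign vectors is bounded below by `-O(n + √D(P‖Q) / t)`.

On the other hand, if `a ≠ b` are the Gaussian weights of the two halves of the data, then
`2n² p_{ij}` tends to `2a / (a + b)` and `2b / (a + b)` within the halves and to `1` across them.
Take `t = η / (2n²)`: as `(a + b) / 2a + (a + b) / 2b > 2`, for small `η` the quadratic form in the
direction `(1, …, 1, -1, …, -1)` is at most `-g n²` with `g > 0`, which bounds `D(P‖Q)` away from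
zero.
-/

open InformationTheory ProbabilityTheory Topology ComplexConjugate

section Pairs

variable {ι M : Type*} [Fintype ι] [LinearOrder ι] [AddCommMonoid M]

variable (ι) in
/-- The unordered pairs `{i, j}` of distinct elements of `ι`, each encoded by the ordered pair
with `i < j`, which is the convention of `Zsum` and `KLpairs`. -/
def ltPairs : Finset (ι × ι) := {e | e.1 < e.2}

lemma mem_ltPairs {e : ι × ι} : e ∈ ltPairs ι ↔ e.1 < e.2 := by simp [ltPairs]

lemma sum_ltPairs (f : ι → ι → M) :
    ∑ e ∈ ltPairs ι, f e.1 e.2 = ∑ i, ∑ j, if i < j then f i j else 0 := by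
  rw [ltPairs, sum_filter, Fintype.sum_prod_type]

lemma sum_sum_eq_sum_diag_add_sum_ltPairs (f : ι → ι → M) :
    ∑ i, ∑ j, f i j = ∑ i, f i i + ∑ e ∈ ltPairs ι, (f e.1 e.2 + f e.2 e.1) := by
  have trichotomy (i j : ι) : f i j = (if i = j then f i i else 0) +
      ((if i < j then f i j else 0) + if j < i then f i j else 0) := by
    rcases lt_trichotomy i j with h | rfl | h
    · simp [h, h.ne, h.not_gt]
    · simp
    · simp [h, h.ne', h.not_gt]
  rw [sum_add_distrib, sum_ltPairs, sum_ltPairs fun i j => f j i,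
    sum_comm (f := fun i j => if i < j then f j i else 0)]
  conv_lhs => enter [2, i, 2, j]; rw [trichotomy i j]
  simp only [sum_add_distrib, sum_ite_eq, mem_univ, if_true]

end Pairs

section Pinsker

lemma sqrt_sub_one_sq_le_klFun {x : ℝ} (hx : 0 ≤ x) : (√x - 1) ^ 2 ≤ klFun x := by
  rcases hx.eq_or_lt with rfl | hx
  · simp [klFun_apply]
  obtain ⟨s, hs, rfl⟩ : ∃ s, 0 < s ∧ s ^ 2 = x := ⟨√x, Real.sqrt_pos.2 hx, Real.sq_sqrt hx.le⟩
  have hlog : 1 - s⁻¹ ≤ Real.log s := Real.one_sub_inv_le_log_of_pos hs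
  calc (√(s ^ 2) - 1) ^ 2 = s ^ 2 * (2 * (1 - s⁻¹)) + 1 - s ^ 2 := by
        rw [Real.sqrt_sq hs.le]
        field_simp
        ring
    _ ≤ s ^ 2 * (2 * Real.log s) + 1 - s ^ 2 := by gcongr
    _ = klFun (s ^ 2) := by rw [klFun_apply, Real.log_pow, Nat.cast_ofNat]

lemma sub_one_sq_le_mul_klFun {x : ℝ} (hx : 0 ≤ x) : (x - 1) ^ 2 ≤ 2 * (x + 1) * klFun x := by
  have hsq := Real.sq_sqrt hx
  calc (x - 1) ^ 2 = (√x + 1) ^ 2 * (√x - 1) ^ 2 := by nth_rw 1 [← hsq]; ring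
    _ ≤ 2 * (x + 1) * (√x - 1) ^ 2 := by
        gcongr
        linarith [sq_nonneg (√x - 1)]
    _ ≤ 2 * (x + 1) * klFun x := by
        gcongr
        exact sqrt_sub_one_sq_le_klFun hx

variable {ι : Type*} {s : Finset ι} {p q : ι → ℝ}

-- Pinsker's inequality, with `4` in place of the optimal constant `2`.
lemma sum_abs_sub_sq_le_four_mul_sum_mul_log (hp : ∀ e ∈ s, 0 ≤ p e) (hq : ∀ e ∈ s, 0 < q e)
    (hp1 : ∑ e ∈ s, p e = 1) (hq1 : ∑ e ∈ s, q e = 1) :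
    (∑ e ∈ s, |p e - q e|) ^ 2 ≤ 4 * ∑ e ∈ s, p e * Real.log (p e / q e) := by
  have hr : ∀ e ∈ s, 0 ≤ p e / q e := fun e he => div_nonneg (hp e he) (hq e he).le
  have sum_kl : ∑ e ∈ s, q e * klFun (p e / q e) = ∑ e ∈ s, p e * Real.log (p e / q e) := by
    have (e) (he : e ∈ s) :
        q e * klFun (p e / q e) = p e * Real.log (p e / q e) + (q e - p e) := by
      have := (hq e he).ne'
      rw [klFun_apply]
      field_simp
      ring
    rw [sum_congr rfl this, sum_add_distrib, sum_sub_distrib, hp1, hq1, sub_self, add_zero]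
  have sum_weight : ∑ e ∈ s, 2 * (p e + q e) = 4 := by
    rw [← mul_sum, sum_add_distrib, hp1, hq1]
    norm_num
  rw [← sum_kl, ← sum_weight]
  refine sum_sq_le_sum_mul_sum_of_sq_le_mul s
    (fun e he => by linarith [hp e he, hq e he])
    (fun e he => mul_nonneg (hq e he).le (klFun_nonneg (hr e he))) fun e he => ?_
  have hqe := hq e he
  calc |p e - q e| ^ 2 = q e ^ 2 * (p e / q e - 1) ^ 2 := by rw [sq_abs]; field_simp
    _ ≤ q e ^ 2 * (2 * (p e / q e + 1) * klFun (p e / q e)) := by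
        gcongr
        exact sub_one_sq_le_mul_klFun (hr e he)
    _ = 2 * (p e + q e) * (q e * klFun (p e / q e)) := by field_simp

end Pinsker

section ExpNegDiv

lemma sq_mul_exp_neg_le_two {r : ℝ} (hr : 0 ≤ r) : r ^ 2 * Real.exp (-r) ≤ 2 := by
  rw [Real.exp_neg, mul_inv_le_iff₀ (Real.exp_pos r)]
  linarith [Real.quadratic_le_exp_of_nonneg hr]

lemma abs_exp_neg_div_sub_exp_neg_div_le {t x y : ℝ} (ht : 0 < t) (hx : 0 < x) (hy : 0 < y) :
    |Real.exp (-(t / x)) - Real.exp (-(t / y))| ≤ 2 / t * |x - y| := by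
  have hderiv (z : ℝ) (hz : z ∈ Set.Ioi (0 : ℝ)) :
      HasDerivWithinAt (fun z => Real.exp (-(t / z))) (Real.exp (-(t / z)) * (t / z ^ 2))
        (Set.Ioi 0) z := by
    have hinv : HasDerivAt (fun z => -(t / z)) (t / z ^ 2) z := by
      simpa [div_eq_mul_inv] using ((hasDerivAt_inv (ne_of_gt hz)).const_mul t).fun_neg
    exact hinv.exp.hasDerivWithinAt
  have hbound (z : ℝ) (hz : z ∈ Set.Ioi (0 : ℝ)) : ‖Real.exp (-(t / z)) * (t / z ^ 2)‖ ≤ 2 / t := by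
    have hz : 0 < z := hz
    rw [Real.norm_of_nonneg (by positivity), le_div_iff₀ ht]
    calc _ = (t / z) ^ 2 * Real.exp (-(t / z)) := by ring
      _ ≤ 2 := sq_mul_exp_neg_le_two (by positivity)
  exact (convex_Ioi 0).norm_image_sub_le_of_norm_hasDerivWithin_le hderiv hbound hy hx

lemma exists_exp_add_exp_lt {t u v : ℝ} (h : 2 * t < u + v) :
    ∃ η > 0, Real.exp (-(η * u)) + Real.exp (-(η * v)) < 2 * Real.exp (-(η * t)) := by
  let f (η : ℝ) := Real.exp (-(η * u)) + Real.exp (-(η * v)) - 2 * Real.exp (-(η * t))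
  have hexp (a : ℝ) : HasDerivAt (fun η : ℝ => Real.exp (-(η * a))) (-a) 0 := by
    simpa using ((hasDerivAt_id (0 : ℝ)).mul_const a).neg.exp
  have hderiv : HasDerivAt f (-u + -v - 2 * -t) 0 :=
    ((hexp u).add (hexp v)).sub ((hexp t).const_mul 2)
  have hneg : -u + -v - 2 * -t < 0 := by linarith
  obtain ⟨η, hslope, hη⟩ := ((hderiv.tendsto_slope_zero_right.eventually_lt_const hneg).and
    self_mem_nhdsWithin).exists
  have hη : 0 < η := hη
  have hf0 : f 0 = 0 := by simp only [f, zero_mul, neg_zero, Real.exp_zero]; norm_num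
  rw [zero_add, hf0, sub_zero, smul_eq_mul] at hslope
  exact ⟨η, hη, sub_neg.1 ((pos_iff_neg_of_mul_neg hslope).1 (inv_pos.2 hη))⟩

end ExpNegDiv

section PositiveDefinite

variable {ι E : Type*} [Fintype ι] [NormedAddCommGroup E] [InnerProductSpace ℝ E]

-- The computation behind the easy direction of Bochner's theorem.
lemma sum_sum_mul_conj_mul_charFun_sub [MeasurableSpace E] [OpensMeasurableSpace E]
    [SecondCountableTopology E] (μ : Measure E) [IsFiniteMeasure μ] (c : ι → ℂ) (y : ι → E) :
    ∑ i, ∑ j, c i * conj (c j) * charFun μ (y i - y j) =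
      ((∫ x, ‖∑ i, c i * Complex.exp ((inner ℝ x (y i) : ℝ) * Complex.I)‖ ^ 2 ∂μ : ℝ) : ℂ) := by
  have hint (z : E) : Integrable (fun x => Complex.exp ((inner ℝ x z : ℝ) * Complex.I)) μ :=
    .of_bound (by fun_prop) 1 (ae_of_all _ fun x => (Complex.norm_exp_ofReal_mul_I _).le)
  have hsq (x : E) :
      ((‖∑ i, c i * Complex.exp ((inner ℝ x (y i) : ℝ) * Complex.I)‖ ^ 2 : ℝ) : ℂ) =
        ∑ i, ∑ j, c i * conj (c j) * Complex.exp ((inner ℝ x (y i - y j) : ℝ) * Complex.I) := by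
    rw [Complex.ofReal_pow, ← Complex.mul_conj', map_sum, sum_mul_sum]
    refine sum_congr rfl fun i _ => sum_congr rfl fun j _ => ?_
    rw [map_mul, ← Complex.exp_conj, map_mul, Complex.conj_ofReal, Complex.conj_I, inner_sub_right,
      Complex.ofReal_sub, sub_mul, sub_eq_add_neg, Complex.exp_add, mul_neg]
    ring
  rw [← integral_complex_ofReal]
  simp only [hsq]
  rw [integral_finsetSum _ fun i _ => integrable_finsetSum _ fun j _ => (hint _).const_mul _]
  refine sum_congr rfl fun i _ => ?_
  rw [integral_finsetSum _ fun j _ => (hint _).const_mul _]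
  exact sum_congr rfl fun j _ => by rw [integral_const_mul, charFun_apply]

lemma sum_sum_mul_exp_neg_mul_norm_sub_sq_nonneg [FiniteDimensional ℝ E] (c : ι → ℝ) (y : ι → E)
    {t : ℝ} (ht : 0 ≤ t) : 0 ≤ ∑ i, ∑ j, c i * c j * Real.exp (-(t * ‖y i - y j‖ ^ 2)) := by
  borelize E
  have hchar (i j : ι) : charFun (stdGaussian E) (√(2 * t) • y i - √(2 * t) • y j) =
      Real.exp (-(t * ‖y i - y j‖ ^ 2)) := by
    rw [charFun_stdGaussian, ← smul_sub, norm_smul, Real.norm_of_nonneg (Real.sqrt_nonneg _),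
      ← Complex.ofReal_pow, mul_pow, Real.sq_sqrt (by positivity)]
    push_cast
    ring_nf
  have key := sum_sum_mul_conj_mul_charFun_sub (stdGaussian E) (fun i => (c i : ℂ))
    fun i => √(2 * t) • y i
  simp only [hchar, Complex.conj_ofReal] at key
  norm_cast at key
  rw [key]
  positivity

end PositiveDefinite

section Similarities

variable {N d s : ℕ} (x : Fin N → EuclideanSpace ℝ (Fin d)) (σ : Fin N → ℝ)
  (y : Fin N → EuclideanSpace ℝ (Fin s)) {i j : Fin N}

lemma ltPairs_nonempty (hN : 2 ≤ N) : (ltPairs (Fin N)).Nonempty :=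
  ⟨(⟨0, by omega⟩, ⟨1, by omega⟩), mem_ltPairs.2 (by simp)⟩

lemma pcond_pos (hij : i ≠ j) : 0 < pcond x σ i j :=
  div_pos (Real.exp_pos _)
    (sum_pos (fun _ _ => Real.exp_pos _) ⟨j, mem_erase.2 ⟨hij.symm, mem_univ j⟩⟩)

lemma pmat_pos (hij : i ≠ j) : 0 < pmat x σ i j := by
  have := pcond_pos x σ hij
  have := pcond_pos x σ hij.symm
  have := i.pos
  unfold pmat
  positivity

lemma sum_pcond_erase (hN : 2 ≤ N) (i : Fin N) : ∑ j ∈ univ.erase i, pcond x σ i j = 1 := by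
  have hne : (univ.erase i).Nonempty := by
    rw [← card_pos, card_erase_of_mem (mem_univ i), card_univ, Fintype.card_fin]
    omega
  simp only [pcond, ← sum_div]
  exact div_self (sum_pos (fun _ _ => Real.exp_pos _) hne).ne'

lemma sum_pmat (hN : 2 ≤ N) : ∑ e ∈ ltPairs (Fin N), pmat x σ e.1 e.2 = 1 := by
  have hrow (i : Fin N) : ∑ j, pcond x σ i j = pcond x σ i i + 1 := by
    rw [← sum_pcond_erase x σ hN i, add_sum_erase _ _ (mem_univ i)]
  have hsum := sum_sum_eq_sum_diag_add_sum_ltPairs (pcond x σ)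
  simp only [hrow, sum_add_distrib, sum_const, card_univ, Fintype.card_fin, nsmul_one,
    add_right_inj] at hsum
  have hN0 : (N : ℝ) ≠ 0 := by norm_cast; omega
  simp only [pmat, ← sum_div, sum_add_distrib]
  rw [add_comm, ← hsum, div_self hN0]

lemma Zsum_eq_sum_ltPairs : Zsum y = ∑ e ∈ ltPairs (Fin N), (1 + ‖y e.1 - y e.2‖ ^ 2)⁻¹ :=
  (sum_ltPairs fun i j => (1 + ‖y i - y j‖ ^ 2)⁻¹).symm

lemma Zsum_nonneg : 0 ≤ Zsum y := by
  rw [Zsum_eq_sum_ltPairs]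
  positivity

lemma Zsum_pos (hN : 2 ≤ N) : 0 < Zsum y := by
  rw [Zsum_eq_sum_ltPairs]
  exact sum_pos (fun _ _ => by positivity) (ltPairs_nonempty hN)

lemma qmat_pos (hN : 2 ≤ N) (i j : Fin N) : 0 < qmat y i j := by
  have := Zsum_pos y hN
  unfold qmat
  positivity

lemma qmat_symm (i j : Fin N) : qmat y i j = qmat y j i := by
  rw [qmat, qmat, norm_sub_rev]

lemma sum_qmat (hN : 2 ≤ N) : ∑ e ∈ ltPairs (Fin N), qmat y e.1 e.2 = 1 := by
  simp only [qmat, ← sum_div, ← Zsum_eq_sum_ltPairs]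
  exact div_self (Zsum_pos y hN).ne'

lemma KLpairs_eq_sum_ltPairs (p q : Fin N → Fin N → ℝ) :
    KLpairs p q = ∑ e ∈ ltPairs (Fin N), p e.1 e.2 * Real.log (p e.1 e.2 / q e.1 e.2) :=
  (sum_ltPairs _).symm

lemma sum_abs_sub_qmat_le {p : Fin N → Fin N → ℝ} (hN : 2 ≤ N)
    (hp : ∀ e ∈ ltPairs (Fin N), 0 ≤ p e.1 e.2) (hp1 : ∑ e ∈ ltPairs (Fin N), p e.1 e.2 = 1) :
    ∑ e ∈ ltPairs (Fin N), |p e.1 e.2 - qmat y e.1 e.2| ≤ 2 * √(KLpairs p (qmat y)) := by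
  have hsq : (2 : ℝ) * √(KLpairs p (qmat y)) = √(4 * KLpairs p (qmat y)) := by
    rw [Real.sqrt_mul (by norm_num), show (4 : ℝ) = 2 ^ 2 by norm_num, Real.sqrt_sq (by norm_num)]
  rw [hsq, KLpairs_eq_sum_ltPairs]
  exact Real.le_sqrt_of_sq_le (sum_abs_sub_sq_le_four_mul_sum_mul_log hp
    (fun e _ => qmat_pos y hN e.1 e.2) hp1 (sum_qmat y hN))

end Similarities

section Obstruction

variable {N s : ℕ} (y : Fin N → EuclideanSpace ℝ (Fin s)) {c : Fin N → ℝ} {t : ℝ}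

lemma sum_sum_mul_exp_neg_div_qmat_nonneg (c : Fin N → ℝ) (ht : 0 ≤ t) :
    0 ≤ ∑ i, ∑ j, c i * c j * Real.exp (-(t / qmat y i j)) := by
  have hker (i j : Fin N) : c i * c j * Real.exp (-(t / qmat y i j)) = Real.exp (-(t * Zsum y)) *
      (c i * c j * Real.exp (-(t * Zsum y * ‖y i - y j‖ ^ 2))) := by
    rw [mul_left_comm, ← Real.exp_add, qmat, div_div_eq_mul_div, div_inv_eq_mul]
    ring_nf
  simp only [hker, ← mul_sum]
  exact mul_nonneg (Real.exp_pos _).le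
    (sum_sum_mul_exp_neg_mul_norm_sub_sq_nonneg c y (mul_nonneg ht (Zsum_nonneg y)))

lemma neg_card_le_two_mul_sum_ltPairs_exp_neg_div_qmat (hc : ∀ i, |c i| ≤ 1) (ht : 0 ≤ t) :
    -(N : ℝ) ≤ 2 * ∑ e ∈ ltPairs (Fin N), c e.1 * c e.2 * Real.exp (-(t / qmat y e.1 e.2)) := by
  have hdiag : ∑ i, c i * c i * Real.exp (-(t / qmat y i i)) ≤ N := by
    have hle (i : Fin N) : c i * c i * Real.exp (-(t / qmat y i i)) ≤ 1 := by
      have hq : 0 ≤ qmat y i i := div_nonneg (by positivity) (Zsum_nonneg y)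
      exact mul_le_one₀ (by rw [← sq]; exact (sq_le_one_iff_abs_le_one _).2 (hc i))
        (Real.exp_pos _).le (Real.exp_le_one_iff.2 (neg_nonpos.2 (div_nonneg ht hq)))
    simpa using sum_le_card_nsmul univ _ 1 fun i _ => hle i
  have hpos := sum_sum_mul_exp_neg_div_qmat_nonneg y c ht
  rw [sum_sum_eq_sum_diag_add_sum_ltPairs] at hpos
  have hswap (e : Fin N × Fin N) :
      c e.1 * c e.2 * Real.exp (-(t / qmat y e.1 e.2)) +
        c e.2 * c e.1 * Real.exp (-(t / qmat y e.2 e.1)) =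
      2 * (c e.1 * c e.2 * Real.exp (-(t / qmat y e.1 e.2))) := by
    rw [qmat_symm y e.2 e.1]
    ring
  simp only [hswap, ← mul_sum] at hpos
  linarith

lemma abs_sum_sub_sum_exp_neg_div_le {ι : Type*} {S : Finset ι} {c p q : ι → ℝ}
    (hc : ∀ e ∈ S, |c e| ≤ 1) (hp : ∀ e ∈ S, 0 < p e) (hq : ∀ e ∈ S, 0 < q e) (ht : 0 < t) :
    |∑ e ∈ S, c e * Real.exp (-(t / p e)) - ∑ e ∈ S, c e * Real.exp (-(t / q e))| ≤
      2 / t * ∑ e ∈ S, |p e - q e| := by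
  rw [← sum_sub_distrib, mul_sum]
  refine (abs_sum_le_sum_abs _ _).trans (sum_le_sum fun e he => ?_)
  rw [← mul_sub, abs_mul]
  exact (mul_le_of_le_one_left (abs_nonneg _) (hc e he)).trans
    (abs_exp_neg_div_sub_exp_neg_div_le ht (hp e he) (hq e he))

theorem neg_sum_mul_exp_neg_div_le_sqrt_KLpairs {p : Fin N → Fin N → ℝ} (hN : 2 ≤ N)
    (hp : ∀ e ∈ ltPairs (Fin N), 0 < p e.1 e.2) (hp1 : ∑ e ∈ ltPairs (Fin N), p e.1 e.2 = 1)
    (hc : ∀ i, |c i| ≤ 1) (ht : 0 < t) :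
    -∑ e ∈ ltPairs (Fin N), c e.1 * c e.2 * Real.exp (-(t / p e.1 e.2)) ≤
      N / 2 + 4 / t * √(KLpairs p (qmat y)) := by
  have hq := neg_card_le_two_mul_sum_ltPairs_exp_neg_div_qmat y hc ht.le
  have hpq := neg_le_of_abs_le (abs_sum_sub_sum_exp_neg_div_le
    (S := ltPairs (Fin N)) (c := fun e => c e.1 * c e.2) (p := fun e => p e.1 e.2)
    (q := fun e => qmat y e.1 e.2)
    (fun e _ => by rw [abs_mul]; exact mul_le_one₀ (hc e.1) (abs_nonneg _) (hc e.2))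
    hp (fun e _ => qmat_pos y hN e.1 e.2) ht)
  have hpinsker : 2 / t * ∑ e ∈ ltPairs (Fin N), |p e.1 e.2 - qmat y e.1 e.2| ≤
      4 / t * √(KLpairs p (qmat y)) :=
    calc _ ≤ 2 / t * (2 * √(KLpairs p (qmat y))) := by
          gcongr
          exact sum_abs_sub_qmat_le y hN (fun e he => (hp e he).le) hp1
      _ = 4 / t * √(KLpairs p (qmat y)) := by ring
  linarith

end Obstruction

section TwoBlocks

/-- The family on `2n` indices equal to `a` on the first half and to `b` on the second. -/
def twoBlock {α : Type*} (n : ℕ) (a b : α) (i : Fin (2 * n)) : α := if (i : ℕ) < n then a else b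

lemma comp_twoBlock {α β : Type*} (f : α → β) (n : ℕ) (a b : α) (i : Fin (2 * n)) :
    f (twoBlock n a b i) = twoBlock n (f a) (f b) i := apply_ite f _ _ _

lemma sum_twoBlock {M : Type*} [AddCommMonoid M] (n : ℕ) (a b : M) :
    ∑ i, twoBlock n a b i = n • a + n • b := by
  have hfirst : ∑ k ∈ range n, (if k < n then a else b) = n • a := by
    rw [sum_congr rfl fun k hk => if_pos (mem_range.1 hk), sum_const, card_range]
  simp only [twoBlock]
  rw [Fin.sum_univ_eq_sum_range (fun k => if k < n then a else b), two_mul, sum_range_add, hfirst]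
  simp

lemma two_mul_sum_ltPairs_twoBlock {α : Type*} (n : ℕ) (a b : α) {f : α → α → ℝ}
    (hf : ∀ u v, f u v = f v u) :
    2 * ∑ e ∈ ltPairs (Fin (2 * n)), twoBlock n (1 : ℝ) (-1) e.1 * twoBlock n (1 : ℝ) (-1) e.2 *
        f (twoBlock n a b e.1) (twoBlock n a b e.2) =
      n ^ 2 * (f a a + f b b - 2 * f a b) - n * (f a a + f b b) := by
  let F (i j : Fin (2 * n)) : ℝ := twoBlock n (1 : ℝ) (-1) i * twoBlock n (1 : ℝ) (-1) j *
    f (twoBlock n a b i) (twoBlock n a b j)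
  have hF (i j : Fin (2 * n)) :
      F i j = twoBlock n (twoBlock n (f a a) (-f a b) j) (twoBlock n (-f a b) (f b b) j) i := by
    simp only [F, twoBlock]
    split_ifs <;> simp [hf b a]
  have hfull : ∑ i, ∑ j, F i j = n ^ 2 * (f a a + f b b - 2 * f a b) := by
    rw [sum_comm]
    simp only [hF, sum_twoBlock, nsmul_eq_mul, sum_add_distrib, ← mul_sum]
    ring
  have hdiag : ∑ i, F i i = n * (f a a + f b b) := by
    have (i : Fin (2 * n)) : F i i = twoBlock n (f a a) (f b b) i := by
      rw [hF]
      simp only [twoBlock]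
      split_ifs <;> rfl
    simp only [this, sum_twoBlock, nsmul_eq_mul]
    ring
  have hswap (e : Fin (2 * n) × Fin (2 * n)) : F e.1 e.2 + F e.2 e.1 = 2 * F e.1 e.2 := by
    simp only [F, hf (twoBlock n a b e.2)]
    ring
  have hsum := sum_sum_eq_sum_diag_add_sum_ltPairs F
  simp only [hswap, ← mul_sum] at hsum
  linarith

/-- For `2n` orthogonal points whose Gaussian weights have mean `S / 2`, this is `2n²` times the
input probability `p_{ij}` of two points of weights `a` and `b`. -/
def scaledProb (S : ℝ) (n : ℕ) (a b : ℝ) : ℝ := n * (a / (n * S - b) + b / (n * S - a))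

lemma scaledProb_comm (S : ℝ) (n : ℕ) (a b : ℝ) : scaledProb S n a b = scaledProb S n b a := by
  rw [scaledProb, scaledProb, add_comm]

lemma tendsto_scaledProb {S : ℝ} (hS : S ≠ 0) (a b : ℝ) :
    Tendsto (fun n => scaledProb S n a b) atTop (𝓝 ((a + b) / S)) := by
  have hterm (a b : ℝ) : Tendsto (fun n : ℕ => a / (S - b / n)) atTop (𝓝 (a / S)) := by
    have hden : Tendsto (fun n : ℕ => S - b / n) atTop (𝓝 (S - 0)) :=
      (tendsto_const_div_atTop_nhds_zero_nat b).const_sub S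
    rw [sub_zero] at hden
    exact tendsto_const_nhds.div hden hS
  rw [add_div]
  refine ((hterm a b).add (hterm b a)).congr' ?_
  filter_upwards [eventually_ne_atTop 0] with n hn
  have hn : (n : ℝ) ≠ 0 := Nat.cast_ne_zero.2 hn
  have hscale (a b : ℝ) : a / (S - b / n) = n * (a / (n * S - b)) := by
    rw [← mul_div_mul_left _ _ hn, mul_sub, mul_div_cancel₀ _ hn, mul_div_assoc]
  rw [hscale, hscale, scaledProb, mul_add]

/-- Minus the coefficient of `n²` in the quadratic form of the kernel `exp (-η / (2n² p_{ij}))` in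
the direction that is `1` on the first block and `-1` on the second. It would be nonpositive if `p`
were realised by an embedding. -/
def blockGap (a b η : ℝ) (n : ℕ) : ℝ :=
  2 * Real.exp (-(η / scaledProb (a + b) n a b)) -
    Real.exp (-(η / scaledProb (a + b) n a a)) - Real.exp (-(η / scaledProb (a + b) n b b))

lemma two_lt_add_div_add_add_div {a b : ℝ} (ha : 0 < a) (hb : 0 < b) (hab : a ≠ b) :
    2 < (a + b) / (a + a) + (a + b) / (b + b) := by
  have : 0 < (a - b) ^ 2 := sq_pos_of_ne_zero (sub_ne_zero.2 hab)
  have hsum : (a + b) / (a + a) + (a + b) / (b + b) = 2 + (a - b) ^ 2 / (2 * a * b) := by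
    field_simp
    ring
  rw [hsum]
  exact lt_add_of_pos_right 2 (by positivity)

lemma exists_tendsto_blockGap_pos {a b : ℝ} (ha : 0 < a) (hb : 0 < b) (hab : a ≠ b) :
    ∃ η > 0, ∃ g > 0, Tendsto (blockGap a b η) atTop (𝓝 g) := by
  have hS : a + b ≠ 0 := (add_pos ha hb).ne'
  obtain ⟨η, hη, hgap⟩ := exists_exp_add_exp_lt (t := 1)
    (by simpa using two_lt_add_div_add_add_div ha hb hab)
  have hlim {r r' : ℝ} (hr : 0 < r) (hr' : 0 < r') :
      Tendsto (fun n => Real.exp (-(η / scaledProb (a + b) n r r'))) atTop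
        (𝓝 (Real.exp (-(η * ((a + b) / (r + r')))))) := by
    have hdiv := tendsto_const_nhds (x := η) |>.div (tendsto_scaledProb hS r r')
      (div_ne_zero (add_pos hr hr').ne' hS)
    rw [div_div_eq_mul_div, mul_div_assoc] at hdiv
    exact (Real.continuous_exp.tendsto _).comp hdiv.neg
  refine ⟨η, hη, _, ?_, (((hlim ha hb).const_mul 2).sub (hlim ha ha)).sub (hlim hb hb)⟩
  rw [div_self hS]
  linarith

end TwoBlocks

section OrthogonalData

lemma pcond_of_orthogonal {N d : ℕ} {x : Fin N → EuclideanSpace ℝ (Fin d)}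
    (hx : Pairwise fun i j => inner ℝ (x i) (x j) = 0) (σ : Fin N → ℝ) {i j : Fin N}
    (hij : i ≠ j) :
    pcond x σ i j = Real.exp (-‖x j‖ ^ 2 / (2 * σ i ^ 2)) /
      ∑ k ∈ univ.erase i, Real.exp (-‖x k‖ ^ 2 / (2 * σ i ^ 2)) := by
  have hexp {k : Fin N} (hk : i ≠ k) : Real.exp (-‖x i - x k‖ ^ 2 / (2 * σ i ^ 2)) =
      Real.exp (-‖x i‖ ^ 2 / (2 * σ i ^ 2)) * Real.exp (-‖x k‖ ^ 2 / (2 * σ i ^ 2)) := by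
    rw [norm_sub_sq_real, hx hk, ← Real.exp_add]
    ring_nf
  rw [pcond, hexp hij, sum_congr rfl fun k hk => hexp (ne_of_mem_erase hk).symm, ← mul_sum,
    mul_div_mul_left _ _ (Real.exp_pos _).ne']

variable {n d : ℕ} {x : Fin (2 * n) → EuclideanSpace ℝ (Fin d)} {σ a b : ℝ}

lemma pmat_of_orthogonal_of_twoBlock (hx : Pairwise fun i j => inner ℝ (x i) (x j) = 0)
    (hw : ∀ i, Real.exp (-‖x i‖ ^ 2 / (2 * σ ^ 2)) = twoBlock n a b i) {i j : Fin (2 * n)}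
    (hij : i ≠ j) :
    pmat x (fun _ => σ) i j =
      scaledProb (a + b) n (twoBlock n a b i) (twoBlock n a b j) / (2 * n ^ 2) := by
  have hcond {i j : Fin (2 * n)} (hij : i ≠ j) : pcond x (fun _ => σ) i j =
      twoBlock n a b j / (n * (a + b) - twoBlock n a b i) := by
    rw [pcond_of_orthogonal hx _ hij]
    simp only [hw]
    rw [sum_erase_eq_sub (mem_univ i), sum_twoBlock, nsmul_eq_mul, nsmul_eq_mul, mul_add]
  have hn : (n : ℝ) ≠ 0 := by
    have := i.pos
    norm_cast
    omega
  rw [pmat, hcond hij, hcond hij.symm, scaledProb, Nat.cast_mul, Nat.cast_ofNat, pow_two,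
    mul_left_comm, mul_div_mul_left _ _ hn]

lemma mul_blockGap_sub_le_sqrt_KLpairs (hx : Pairwise fun i j => inner ℝ (x i) (x j) = 0)
    (hw : ∀ i, Real.exp (-‖x i‖ ^ 2 / (2 * σ ^ 2)) = twoBlock n a b i) (hn : n ≠ 0) {s : ℕ}
    (y : Fin (2 * n) → EuclideanSpace ℝ (Fin s)) {η : ℝ} (hη : 0 < η) :
    η * (blockGap a b η n / 2 - 1 / n) ≤ 8 * √(KLpairs (pmat x fun _ => σ) (qmat y)) := by
  have : (0 : ℝ) < n := by positivity
  have hN : 2 ≤ 2 * n := by omega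
  let f (r r' : ℝ) : ℝ := Real.exp (-(η / scaledProb (a + b) n r r'))
  have hf (e) (he : e ∈ ltPairs (Fin (2 * n))) :
      Real.exp (-(η / (2 * n ^ 2) / pmat x (fun _ => σ) e.1 e.2)) =
        f (twoBlock n a b e.1) (twoBlock n a b e.2) := by
    rw [pmat_of_orthogonal_of_twoBlock hx hw (mem_ltPairs.1 he).ne,
      div_div_div_cancel_right₀ (by positivity)]
  have hc (i : Fin (2 * n)) : |twoBlock n (1 : ℝ) (-1) i| ≤ 1 := by
    rw [comp_twoBlock abs, abs_neg, abs_one, twoBlock, ite_self]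
  have hobstruction := neg_sum_mul_exp_neg_div_le_sqrt_KLpairs y hN
    (fun e he => pmat_pos x (fun _ => σ) (mem_ltPairs.1 he).ne) (sum_pmat x (fun _ => σ) hN) hc
    (t := η / (2 * n ^ 2)) (by positivity)
  rw [sum_congr rfl fun e he => by rw [hf e he]] at hobstruction
  have hblocks := two_mul_sum_ltPairs_twoBlock n a b (f := f)
    fun r r' => by simp only [f, scaledProb_comm]
  have hdiag : 0 ≤ n * (f a a + f b b) := by positivity
  have hgap : blockGap a b η n = 2 * f a b - f a a - f b b := rfl
  push_cast at hobstruction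
  have hsum : n ^ 2 * (blockGap a b η n / 2) ≤
      n + 4 / (η / (2 * n ^ 2)) * √(KLpairs (pmat x fun _ => σ) (qmat y)) := by
    rw [hgap]
    linarith
  calc η * (blockGap a b η n / 2 - 1 / n)
      = η / n ^ 2 * (n ^ 2 * (blockGap a b η n / 2) - n) := by field_simp
    _ ≤ η / n ^ 2 * (4 / (η / (2 * n ^ 2)) * √(KLpairs (pmat x fun _ => σ) (qmat y))) := by
        gcongr
        linarith
    _ = 8 * √(KLpairs (pmat x fun _ => σ) (qmat y)) := by
        field_simp
        ring

end OrthogonalData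

lemma pairwise_inner_doubledFrame (n : ℕ) :
    Pairwise fun i j => inner ℝ (doubledFrame n i) (doubledFrame n j) = 0 := fun i j hij => by
  simp only [doubledFrame, real_inner_smul_left, real_inner_smul_right,
    EuclideanSpace.inner_single_left]
  simp [hij]

lemma norm_sq_doubledFrame (n : ℕ) (i : Fin (2 * n)) :
    ‖doubledFrame n i‖ ^ 2 = twoBlock n 1 4 i := by
  rw [doubledFrame, norm_smul, PiLp.norm_single, twoBlock]
  split_ifs <;> norm_num

theorem stmt3_general {σ u v : ℝ} (hσ : σ ≠ 0) (huv : u ≠ v) :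
    ∃ c : ℝ, 0 < c ∧ ∃ N : ℕ, ∀ n : ℕ, N ≤ n → ∀ {d s : ℕ}
      (x : Fin (2 * n) → EuclideanSpace ℝ (Fin d)) (y : Fin (2 * n) → EuclideanSpace ℝ (Fin s)),
        (Pairwise fun i j => inner ℝ (x i) (x j) = 0) → (∀ i, ‖x i‖ ^ 2 = twoBlock n u v i) →
          c ≤ KLpairs (pmat x fun _ => σ) (qmat y) := by
  let weight (r : ℝ) : ℝ := Real.exp (-r / (2 * σ ^ 2))
  have hweight : weight u ≠ weight v := by
    simpa [weight, div_left_inj' (show 2 * σ ^ 2 ≠ 0 by positivity)] using huv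
  obtain ⟨η, hη, g, hg, hlim⟩ :=
    exists_tendsto_blockGap_pos (Real.exp_pos _) (Real.exp_pos _) hweight
  have hlim' : Tendsto (fun n : ℕ => η * (blockGap (weight u) (weight v) η n / 2 - 1 / n)) atTop
      (𝓝 (η * (g / 2 - 0))) :=
    ((hlim.div_const 2).sub tendsto_one_div_atTop_nhds_zero_nat).const_mul η
  obtain ⟨N, hN⟩ := eventually_atTop.1 ((hlim'.eventually_const_lt
    (show η * (g / 4) < η * (g / 2 - 0) by gcongr; linarith)).and (eventually_ne_atTop 0))
  refine ⟨(η * (g / 4) / 8) ^ 2, by positivity, N, fun n hn d s x y hx hnorm => ?_⟩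
  obtain ⟨hgap, hn0⟩ := hN n hn
  have hw (i) : Real.exp (-‖x i‖ ^ 2 / (2 * σ ^ 2)) = twoBlock n (weight u) (weight v) i := by
    rw [hnorm i, ← comp_twoBlock weight]
  have hsqrt := mul_blockGap_sub_le_sqrt_KLpairs hx hw hn0 y hη
  exact (Real.le_sqrt' (by positivity)).1 (by linarith)

/-- for the doubled orthogonal frame with constant bandwidth `σ`, there is a
constant `c > 0` such that for all sufficiently large `n` and every embedding
`y : Fin (2n) → ℝ²`, the t-SNE objective satisfies `D(P‖Q) ≥ c`. -/
theorem stmt3 (σ : ℝ) (hσ : 0 < σ) :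
    ∃ c : ℝ, 0 < c ∧ ∃ N : ℕ, ∀ n : ℕ, N ≤ n →
      ∀ y : Fin (2 * n) → EuclideanSpace ℝ (Fin 2),
        c ≤ KLpairs (pmat (doubledFrame n) (fun _ => σ)) (qmat y) := by
  obtain ⟨c, hc, N, h⟩ := stmt3_general hσ.ne' (u := 1) (v := 4) (by norm_num)
  exact ⟨c, hc, N, fun n hn y =>
    h n hn _ y (pairwise_inner_doubledFrame n) (norm_sq_doubledFrame n)⟩

end
end

section
/- Fix σ > 0, δ ∈ (0, 1/2), and a function r = r(d) ∈ (0,1) with r(d)·d^{1/6−δ/3} → ∞ as d → ∞. There exist constants c > 0, c' > 0, C > 0 such that the following holds for all sufficiently large d. Set n = ⌈e^{c·d^{2δ}}⌉, let x_1, …, x_n be independent uniform random points on the unit sphere S^{d−1} ⊂ ℝ^d, and form the t-SNE input distribution P with all bandwidths equal to σ. Then with probability at least 1 − e^{−c'·d^{2δ}}, every global minimizer Y = (y_1, …, y_n) ∈ (ℝ²)^n of the t-SNE objective D(P‖Q) has at least (1 − r(d))·n of its points contained in some open ball of radius r(d), and all n points contained in some ball of radius C·√(r(d)). -/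
open MeasureTheory Filter Finset
open scoped Classical

noncomputable section

/-!
Random points on a high-dimensional sphere are almost orthogonal, so all their distances are almost
equal and the input distribution `P` is nearly uniform. At a minimizer the loss is stationary under
dilations of the embedding; for nearly uniform `P` this makes the variance of the Student-t
similarities small compared with `m * (1 - m)`, where `m` is their mean. But in a fixed dimension a
positive fraction of the pairs must deviate from any prescribed distance, since the graph of nearly
equal distances has no large clique and Turán's theorem bounds its edges. The two estimates force
`m` to be close to `1`. Comparison with the configuration collapsed to one point then bounds the
mean of `log (1 + ‖y i - y j‖ ^ 2)`, so most points lie near some `y i₀`. Finally, minimality under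
moving a single point to `y i₀` shows that no point is far from the bulk.
-/

section NearEquilateral

variable {V P : Type*} [NormedAddCommGroup V] [InnerProductSpace ℝ V] [MetricSpace P]
  [NormedAddTorsor V P] {ι : Type*} {D θ : ℝ}

theorem affineIndependent_of_abs_dist_sq_sub_le [Fintype ι] {x : ι → P} (hD : 0 < D) (hθ : 0 ≤ θ)
    (hcard : Fintype.card ι * θ < 1)
    (hx : Pairwise fun i j ↦ |dist (x i) (x j) ^ 2 - D| ≤ θ * D) :
    AffineIndependent ℝ x := by
  rw [affineIndependent_iff_of_fintype]
  intro w hw hwx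
  have expand : ∑ i, ∑ j, w i * w j * dist (x i) (x j) ^ 2 = 0 := by
    have h := EuclideanGeometry.inner_weightedVSub x hw x hw
    simp only [hwx, inner_zero_left, ← sq] at h
    linarith
  have termwise (i j : ι) : w i * w j * dist (x i) (x j) ^ 2 ≤
      D * (w i * w j) + θ * D * (|w i| * |w j|) - if i = j then (1 + θ) * D * w i ^ 2 else 0 := by
    rcases eq_or_ne i j with rfl | hij
    · rw [dist_self, if_pos rfl, ← sq |w i|, sq_abs]
      linarith
    · have h := (le_abs_self _).trans_eq (abs_mul (w i * w j) (dist (x i) (x j) ^ 2 - D))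
      have h' := mul_le_mul_of_nonneg_left (hx hij) (abs_nonneg (w i * w j))
      rw [if_neg hij, ← abs_mul]
      linarith
  have le_cross : (1 + θ) * ∑ i, w i ^ 2 ≤ θ * (∑ i, |w i|) ^ 2 := by
    have h := expand.symm.le.trans (sum_le_sum fun i _ ↦ sum_le_sum fun j _ ↦ termwise i j)
    simp only [sum_sub_distrib, sum_add_distrib, ← mul_sum, ← sum_mul, hw, sum_ite_eq,
      mem_univ, if_true] at h
    refine le_of_mul_le_mul_left ?_ hD
    linarith
  have cauchy : (∑ i, |w i|) ^ 2 ≤ Fintype.card ι * ∑ i, w i ^ 2 := by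
    simpa only [sq_abs, card_univ] using sq_sum_le_card_mul_sum_sq (s := univ) (f := fun i ↦ |w i|)
  have sum_sq_nonneg : 0 ≤ ∑ i, w i ^ 2 := by positivity
  have sum_sq_eq_zero : ∑ i, w i ^ 2 = 0 := by
    nlinarith [mul_le_mul_of_nonneg_left cauchy hθ]
  intro i
  rw [sum_eq_zero_iff_of_nonneg fun i _ ↦ sq_nonneg (w i)] at sum_sq_eq_zero
  exact sq_eq_zero_iff.1 (sum_sq_eq_zero i (mem_univ i))

/-- The graph joining two distinct indices `i`, `j` when the squared distance of `y i` and `y j` is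
within relative error `θ` of `D`. Its cliques are the nearly regular simplices of side `√D`. -/
def nearDistGraph (y : ι → P) (D θ : ℝ) : SimpleGraph ι where
  Adj i j := i ≠ j ∧ |dist (y i) (y j) ^ 2 - D| ≤ θ * D
  symm := ⟨fun i j h ↦ ⟨h.1.symm, dist_comm (y i) (y j) ▸ h.2⟩⟩
  loopless := ⟨fun _ h ↦ h.1 rfl⟩

variable [FiniteDimensional ℝ V] {y : ι → P}

theorem nearDistGraph_cliqueFree (hD : 0 < D) (hθ : 0 ≤ θ)
    (hdim : (Module.finrank ℝ V + 2) * θ < 1) :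
    (nearDistGraph y D θ).CliqueFree (Module.finrank ℝ V + 2) := by
  intro t ht
  have indep : AffineIndependent ℝ fun i : t ↦ y i :=
    affineIndependent_of_abs_dist_sq_sub_le hD hθ
      (by rw [Fintype.card_coe, ht.card_eq]; exact_mod_cast hdim)
      fun i j hij ↦ (ht.isClique i.2 j.2 (Subtype.coe_injective.ne hij)).2
  have card_le := indep.card_le_finrank_succ.trans (Nat.succ_le_succ (Submodule.finrank_le _))
  rw [Fintype.card_coe, ht.card_eq] at card_le
  omega

theorem le_card_filter_lt_abs_dist_sq_sub [Fintype ι] (hD : 0 < D) (hθ : 0 ≤ θ)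
    (hdim : (Module.finrank ℝ V + 2) * θ < 1) :
    (Fintype.card ι : ℝ) ^ 2 / (Module.finrank ℝ V + 1) - Fintype.card ι ≤
      #{a ∈ (univ : Finset ι).offDiag | θ * D < |dist (y a.1) (y a.2) ^ 2 - D|} := by
  set s := Module.finrank ℝ V
  set G := nearDistGraph y D θ with hG
  have turan : 2 * (s + 1) * #G.edgeFinset ≤ s * Fintype.card ι ^ 2 :=
    (Nat.mul_le_mul_left _ ((nearDistGraph_cliqueFree hD hθ hdim).card_edgeFinset_le.trans_eq
      SimpleGraph.card_edgeFinset_turanGraph.symm)).trans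
      SimpleGraph.mul_card_edgeFinset_turanGraph_le
  have near_add_far : 2 * #G.edgeFinset +
      #{a ∈ (univ : Finset ι).offDiag | θ * D < |dist (y a.1) (y a.2) ^ 2 - D|} =
      #(univ : Finset ι).offDiag := by
    have near : ({a : ι × ι | G.Adj a.1 a.2} : Finset (ι × ι)) =
        {a ∈ (univ : Finset ι).offDiag | ¬θ * D < |dist (y a.1) (y a.2) ^ 2 - D|} := by
      ext a
      simp only [hG, nearDistGraph, mem_filter, mem_univ, true_and, mem_offDiag, not_lt]
    rw [SimpleGraph.two_mul_card_edgeFinset, near, add_comm]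
    exact card_filter_add_card_filter_not _
  rw [offDiag_card, eq_tsub_iff_add_eq_of_le (Nat.le_mul_self _), card_univ] at near_add_far
  rify at turan near_add_far
  rw [tsub_le_iff_right, div_le_iff₀ (by positivity)]
  nlinarith

end NearEquilateral

theorem one_sub_add_sq_div_two_le_neg_log {w : ℝ} (hw : 0 < w) (hw1 : w ≤ 1) :
    1 - w + (1 - w) ^ 2 / 2 ≤ -Real.log w := by
  have h0 : 0 ≤ 1 - w := sub_nonneg.2 hw1
  have series := Real.hasSum_pow_div_log_of_abs_lt_one (x := 1 - w)
    (by rw [abs_of_nonneg h0]; linarith)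
  have partial_sum_le := sum_le_hasSum (range 2) (fun i _ ↦ by positivity) series
  norm_num [sum_range_succ] at partial_sum_le
  linarith

theorem le_mul_log_sub_log_of_abs_sub_one_le {t v w η : ℝ} (hv : 0 < v) (hv1 : v ≤ 1) (hw : 0 < w)
    (hw1 : w ≤ 1) (ht : |t - 1| ≤ η) (hη : η ≤ 1 / 2) :
    1 - w + (1 - w) ^ 2 / 4 - η - 3 / 2 * -Real.log v ≤ t * (Real.log v - Real.log w) := by
  obtain ⟨ge, le⟩ := abs_le.1 ht
  have η_nonneg : 0 ≤ η := (abs_nonneg _).trans ht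
  have old_ge : (1 - η) * (1 - w + (1 - w) ^ 2 / 2) ≤ t * -Real.log w :=
    mul_le_mul (by linarith) (one_sub_add_sq_div_two_le_neg_log hw hw1)
      (by nlinarith) (by linarith)
  have new_le : t * -Real.log v ≤ 3 / 2 * -Real.log v :=
    mul_le_mul_of_nonneg_right (by linarith) (neg_nonneg.2 (Real.log_nonpos hv.le hv1))
  have := mul_nonneg η_nonneg hw.le
  nlinarith [mul_le_mul_of_nonneg_right hη (sq_nonneg (1 - w))]

section StudentKernel

variable {E : Type*} [PseudoMetricSpace E] {u v : E}

/-- The Student-t similarity `1 / (1 + dist u v ^ 2)` with which t-SNE compares points of the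
embedding. -/
def studentKernel (u v : E) : ℝ :=
  (1 + dist u v ^ 2)⁻¹

theorem studentKernel_pos (u v : E) : 0 < studentKernel u v := by
  unfold studentKernel
  positivity

theorem studentKernel_le_one (u v : E) : studentKernel u v ≤ 1 :=
  inv_le_one_of_one_le₀ (le_add_of_nonneg_right (sq_nonneg _))

theorem studentKernel_self (u : E) : studentKernel u u = 1 := by
  simp [studentKernel]

theorem studentKernel_comm (u v : E) : studentKernel u v = studentKernel v u := by
  rw [studentKernel, dist_comm, studentKernel]

theorem neg_log_studentKernel_nonneg (u v : E) : 0 ≤ -Real.log (studentKernel u v) :=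
  neg_nonneg.2 (Real.log_nonpos (studentKernel_pos u v).le (studentKernel_le_one u v))

theorem one_sub_studentKernel_le_neg_log (u v : E) :
    1 - studentKernel u v ≤ -Real.log (studentKernel u v) := by
  linarith [Real.log_le_sub_one_of_pos (studentKernel_pos u v)]

theorem dist_sq_eq_inv_studentKernel_sub_one (u v : E) :
    dist u v ^ 2 = (studentKernel u v)⁻¹ - 1 := by
  rw [studentKernel, inv_inv, add_sub_cancel_left]

theorem half_le_one_sub_studentKernel {r : ℝ} (hr : 0 ≤ r) (hr1 : r ≤ 1) (h : r ≤ dist u v ^ 2) :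
    r / 2 ≤ 1 - studentKernel u v := by
  have kernel_le : studentKernel u v ≤ (1 + r)⁻¹ := by
    unfold studentKernel
    gcongr
  have : r / 2 ≤ 1 - (1 + r)⁻¹ := by
    rw [le_sub_comm, inv_le_comm₀ (by positivity) (by linarith),
      inv_le_iff_one_le_mul₀ (by linarith)]
    nlinarith
  linarith

theorem abs_dist_sq_sub_le_of_abs_studentKernel_sub_le {m κ : ℝ} (hm : 0 < m) (hm1 : m < 1)
    (hκ : 0 ≤ κ) (hκ1 : κ < 1) (h : |studentKernel u v - m| ≤ κ * (m * (1 - m))) :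
    |dist u v ^ 2 - (1 - m) / m| ≤ κ / (1 - κ) * ((1 - m) / m) := by
  have hK := studentKernel_pos u v
  have h1κ : 0 < 1 - κ := sub_pos.2 hκ1
  have kernel_ge : m * (1 - κ) ≤ studentKernel u v := by
    nlinarith [(abs_le.1 h).1, mul_nonneg hκ (sq_nonneg m)]
  calc |dist u v ^ 2 - (1 - m) / m|
      = |studentKernel u v - m| / (m * studentKernel u v) := by
        rw [dist_sq_eq_inv_studentKernel_sub_one, abs_sub_comm (studentKernel u v),
          ← abs_of_pos (mul_pos hm hK), ← abs_div]
        congr 1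
        field_simp
        ring
    _ ≤ κ * (m * (1 - m)) / (m * (m * (1 - κ))) := by gcongr
    _ = κ / (1 - κ) * ((1 - m) / m) := by field_simp

end StudentKernel

section NearUniform

open scoped BigOperators

variable {α : Type*} {T : Finset α} {p w : α → ℝ} {η : ℝ}

/-- `p` is a probability vector on `T` whose entries are within relative error `η` of the uniform
weight `1 / #T`. -/
structure IsNearUniformOn (T : Finset α) (p : α → ℝ) (η : ℝ) : Prop where
  sum_eq_one : ∑ a ∈ T, p a = 1
  abs_card_mul_sub_one_le : ∀ a ∈ T, |#T * p a - 1| ≤ η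

namespace IsNearUniformOn

theorem nonempty (h : IsNearUniformOn T p η) : T.Nonempty :=
  nonempty_of_sum_ne_zero (h.sum_eq_one.trans_ne one_ne_zero)

theorem nonneg (h : IsNearUniformOn T p η) : 0 ≤ η :=
  have ⟨a, ha⟩ := h.nonempty
  (abs_nonneg _).trans (h.abs_card_mul_sub_one_le a ha)

theorem abs_sum_mul_sub_expect_le (h : IsNearUniformOn T p η) {f : α → ℝ}
    (hf : ∀ a ∈ T, 0 ≤ f a) : |∑ a ∈ T, p a * f a - 𝔼 a ∈ T, f a| ≤ η * 𝔼 a ∈ T, f a := by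
  have diff_eq : ∑ a ∈ T, p a * f a - 𝔼 a ∈ T, f a = 𝔼 a ∈ T, (#T * p a - 1) * f a := by
    simp only [sub_mul, one_mul, expect_sub_distrib, mul_assoc, ← mul_expect, card_mul_expect]
  rw [diff_eq, mul_expect]
  refine (abs_expect_le _ _).trans (expect_le_expect fun a ha ↦ ?_)
  rw [abs_mul, abs_of_nonneg (hf a ha)]
  exact mul_le_mul_of_nonneg_right (h.abs_card_mul_sub_one_le a ha) (hf a ha)

theorem expect_sq_sub_expect_le (h : IsNearUniformOn T p η) (hw : ∀ a ∈ T, 0 ≤ w a)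
    (hw1 : ∀ a ∈ T, w a ≤ 1)
    (hstat : ∑ a ∈ T, w a ^ 2 = (∑ a ∈ T, w a) * ∑ a ∈ T, p a * w a) :
    𝔼 a ∈ T, (w a - 𝔼 b ∈ T, w b) ^ 2 ≤
      η * ((𝔼 a ∈ T, w a) * min (𝔼 a ∈ T, w a) (1 - 𝔼 a ∈ T, w a)) := by
  set m := 𝔼 a ∈ T, w a with hm
  have expect_sq : 𝔼 a ∈ T, w a ^ 2 = m * ∑ a ∈ T, p a * w a := by
    rw [hm, expect_eq_sum_div_card, expect_eq_sum_div_card, hstat, mul_div_right_comm]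
  have variance_eq : 𝔼 a ∈ T, (w a - m) ^ 2 = m * (∑ a ∈ T, p a * w a - m) := by
    simp only [sub_sq, expect_add_distrib, expect_sub_distrib, expect_sq, expect_const h.nonempty,
      ← mul_expect, ← expect_mul, ← hm]
    ring
  have le_mean : ∑ a ∈ T, p a * w a - m ≤ η * m := (abs_le.1 (h.abs_sum_mul_sub_expect_le hw)).2
  have le_one_sub_mean : ∑ a ∈ T, p a * w a - m ≤ η * (1 - m) := by
    have := (abs_le.1 (h.abs_sum_mul_sub_expect_le fun a ha ↦ sub_nonneg.2 (hw1 a ha))).1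
    simp only [mul_sub, mul_one, sum_sub_distrib, h.sum_eq_one, expect_sub_distrib,
      expect_const h.nonempty, ← hm] at this
    linarith
  rw [variance_eq, mul_left_comm, mul_min_of_nonneg _ _ h.nonneg]
  exact mul_le_mul_of_nonneg_left (le_min le_mean le_one_sub_mean) (expect_nonneg hw)

end IsNearUniformOn

theorem sum_inv_one_add_sq_eq_of_forall_le_scale {D : α → ℝ} (hp : ∑ a ∈ T, p a = 1)
    (hD : ∀ a, 0 ≤ D a)
    (hmin : ∀ t, 0 < t → Real.log (∑ a ∈ T, (1 + D a)⁻¹) - ∑ a ∈ T, p a * Real.log (1 + D a)⁻¹ ≤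
      Real.log (∑ a ∈ T, (1 + t * D a)⁻¹) - ∑ a ∈ T, p a * Real.log (1 + t * D a)⁻¹) :
    ∑ a ∈ T, ((1 + D a)⁻¹) ^ 2 = (∑ a ∈ T, (1 + D a)⁻¹) * ∑ a ∈ T, p a * (1 + D a)⁻¹ := by
  have pos (a : α) : 0 < 1 + D a := add_pos_of_pos_of_nonneg one_pos (hD a)
  have sum_pos : 0 < ∑ a ∈ T, (1 + D a)⁻¹ := Finset.sum_pos (fun a _ ↦ inv_pos.2 (pos a))
    (nonempty_of_sum_ne_zero (hp.trans_ne one_ne_zero))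
  have deriv_inv (a : α) : HasDerivAt (fun t : ℝ ↦ (1 + t * D a)⁻¹)
      (((1 + D a)⁻¹) ^ 2 - (1 + D a)⁻¹) 1 := by
    have h := (((hasDerivAt_id (1 : ℝ)).mul_const (D a)).const_add 1).fun_inv
      (by simpa using (pos a).ne')
    convert! h using 1
    simp only [id, one_mul]
    field_simp [(pos a).ne']
    ring
  have deriv_log (a : α) : HasDerivAt (fun t : ℝ ↦ Real.log (1 + t * D a)⁻¹)
      ((1 + D a)⁻¹ - 1) 1 := by
    have h := (deriv_inv a).log (by simpa using (pos a).ne')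
    convert! h using 1
    simp only [one_mul]
    field_simp [(pos a).ne']
  have deriv_loss := ((HasDerivAt.fun_sum fun a (_ : a ∈ T) ↦ deriv_inv a).log
    (by simpa using sum_pos.ne')).sub
    (HasDerivAt.fun_sum fun a (_ : a ∈ T) ↦ (deriv_log a).const_mul (p a))
  have min_one : IsLocalMin ((fun t : ℝ ↦ Real.log (∑ a ∈ T, (1 + t * D a)⁻¹)) -
      fun t : ℝ ↦ ∑ a ∈ T, p a * Real.log (1 + t * D a)⁻¹) 1 := by
    filter_upwards [lt_mem_nhds one_pos] with t ht
    simpa using hmin t ht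
  have stationary := min_one.hasDerivAt_eq_zero deriv_loss
  simp only [one_mul, mul_sub, mul_one, sum_sub_distrib, hp] at stationary
  rw [sub_div, div_self sum_pos.ne'] at stationary
  rw [mul_comm, ← div_eq_iff sum_pos.ne']
  linarith

end NearUniform

section OffDiagSums

variable {ι M : Type*} [Fintype ι]

theorem sum_offDiag_univ [DecidableEq ι] [AddCommMonoid M] (f : ι → ι → M) :
    ∑ a ∈ univ.offDiag, f a.1 a.2 = ∑ i, ∑ j ∈ univ.erase i, f i j :=
  sum_finset_product' _ _ _ fun a ↦ by simp [eq_comm]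

theorem sum_offDiag_univ_of_diag_eq_zero [AddCommMonoid M] {f : ι → ι → M}
    (hf : ∀ i, f i i = 0) : ∑ a ∈ univ.offDiag, f a.1 a.2 = ∑ i, ∑ j, f i j := by
  rw [sum_offDiag_univ]
  exact sum_congr rfl fun i _ ↦ sum_erase _ (hf i)

theorem sum_offDiag_univ_of_symm_of_support_star [DecidableEq ι] {h : ι → ι → ℝ} {k : ι}
    (hsymm : ∀ i j, h i j = h j i) (hstar : ∀ i j, i ≠ k → j ≠ k → h i j = 0) :
    ∑ a ∈ univ.offDiag, h a.1 a.2 = 2 * ∑ j ∈ univ.erase k, h k j := by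
  have inner_sum (i : ι) (hi : i ∈ univ.erase k) : ∑ j ∈ univ.erase i, h i j = h k i := by
    have hik := ne_of_mem_erase hi
    rw [sum_eq_single_of_mem k (mem_erase.2 ⟨hik.symm, mem_univ k⟩)
      fun j _ hjk ↦ hstar i j hik hjk, hsymm]
  rw [sum_offDiag_univ, ← add_sum_erase _ _ (mem_univ k), sum_congr rfl inner_sum, two_mul]

theorem sum_offDiag_univ_update_sub [DecidableEq ι] {E : Type*} {g : ι → ι → ℝ} {φ : E → E → ℝ}
    (hg : ∀ i j, g i j = g j i) (hφ : ∀ u v, φ u v = φ v u) (y : ι → E) (k : ι) (z : E) :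
    ∑ a ∈ univ.offDiag, g a.1 a.2 * φ (Function.update y k z a.1) (Function.update y k z a.2) -
        ∑ a ∈ univ.offDiag, g a.1 a.2 * φ (y a.1) (y a.2) =
      2 * ∑ j ∈ univ.erase k, g k j * (φ z (y j) - φ (y k) (y j)) := by
  set y' := Function.update y k z with hy'
  have off (i : ι) (hi : i ≠ k) : y' i = y i := Function.update_of_ne hi _ _
  rw [← sum_sub_distrib, sum_offDiag_univ_of_symm_of_support_star (k := k)
    (h := fun i j ↦ g i j * φ (y' i) (y' j) - g i j * φ (y i) (y j))
    (fun i j ↦ by rw [hg, hφ (y' i), hφ (y i)])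
    fun i j hi hj ↦ by rw [off i hi, off j hj, sub_self]]
  refine congrArg (2 * ·) (sum_congr rfl fun j hj ↦ ?_)
  rw [off j (ne_of_mem_erase hj), hy', Function.update_self, mul_sub]

end OffDiagSums

section TSNELoss

open scoped BigOperators

variable {ι E : Type*} [Fintype ι]

/-- The part of the Kullback–Leibler divergence of t-SNE that depends on the embedding `y`: the
divergence from the input distribution `p` on ordered pairs of distinct indices to the output
distribution of `y` equals `tsneLoss p y` up to the entropy of `p`. -/
def tsneLoss [PseudoMetricSpace E] (p : ι × ι → ℝ) (y : ι → E) : ℝ :=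
  Real.log (∑ a ∈ univ.offDiag, studentKernel (y a.1) (y a.2)) -
    ∑ a ∈ univ.offDiag, p a * Real.log (studentKernel (y a.1) (y a.2))

/-- The mean output similarity of an embedding over all pairs of distinct indices. -/
def meanKernel [PseudoMetricSpace E] (y : ι → E) : ℝ :=
  𝔼 a ∈ univ.offDiag, studentKernel (y a.1) (y a.2)

/-- The factor by which the variance of the output similarities of many points in dimension `s` may
fall below the square of `m * (1 - m)`, `m` being their mean. -/
def varianceConst (s : ℕ) : ℝ :=
  8 * (s + 1) * (s + 2) ^ 2

theorem thirtyTwo_le_varianceConst (s : ℕ) : 32 ≤ varianceConst s := by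
  have s_nonneg : (0 : ℝ) ≤ s := s.cast_nonneg
  rw [varianceConst]
  nlinarith [mul_nonneg s_nonneg (sq_nonneg (s + 2 : ℝ))]

theorem varianceConst_nonneg (s : ℕ) : 0 ≤ varianceConst s := by
  linarith [thirtyTwo_le_varianceConst s]

variable {p : ι × ι → ℝ} {η : ℝ}

section Pseudo

variable [PseudoMetricSpace E] {y : ι → E}

theorem meanKernel_pos (hι : (univ : Finset ι).offDiag.Nonempty) : 0 < meanKernel y :=
  expect_pos (fun _ _ ↦ studentKernel_pos _ _) hι

theorem meanKernel_le_one (hι : (univ : Finset ι).offDiag.Nonempty) : meanKernel y ≤ 1 :=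
  expect_le hι fun _ _ ↦ studentKernel_le_one _ _

theorem sum_studentKernel_eq_card_mul_meanKernel :
    ∑ a ∈ univ.offDiag, studentKernel (y a.1) (y a.2) =
      #(univ : Finset ι).offDiag * meanKernel y :=
  (card_mul_expect _ _).symm

end Pseudo

theorem expect_sq_studentKernel_sub_meanKernel_le [NormedAddCommGroup E] [NormedSpace ℝ E]
    {y : ι → E} (hp : IsNearUniformOn univ.offDiag p η)
    (hmin : ∀ y' : ι → E, tsneLoss p y ≤ tsneLoss p y') :
    𝔼 a ∈ univ.offDiag, (studentKernel (y a.1) (y a.2) - meanKernel y) ^ 2 ≤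
      η * (meanKernel y * min (meanKernel y) (1 - meanKernel y)) := by
  have dist_scale (t : ℝ) (ht : 0 < t) (a : ι × ι) :
      dist (√t • y a.1) (√t • y a.2) ^ 2 = t * dist (y a.1) (y a.2) ^ 2 := by
    rw [dist_smul₀, mul_pow, Real.norm_eq_abs, sq_abs, Real.sq_sqrt ht.le]
  have stationary := sum_inv_one_add_sq_eq_of_forall_le_scale
    (D := fun a ↦ dist (y a.1) (y a.2) ^ 2) hp.sum_eq_one (fun _ ↦ sq_nonneg _) fun t ht ↦ by
      simpa only [tsneLoss, studentKernel, dist_scale t ht] using hmin fun i ↦ √t • y i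
  exact hp.expect_sq_sub_expect_le (fun _ _ ↦ (studentKernel_pos _ _).le)
    (fun _ _ ↦ studentKernel_le_one _ _) stationary

section Dimension

variable {V : Type*} [NormedAddCommGroup V] [InnerProductSpace ℝ V] [FiniteDimensional ℝ V]
  {y : ι → V}

theorem card_offDiag_le_card_filter_lt_abs_studentKernel_sub {m : ℝ} (hm : 0 < m) (hm1 : m < 1)
    (hcard : 2 * (Module.finrank ℝ V + 1) ≤ Fintype.card ι) :
    (#(univ : Finset ι).offDiag : ℝ) ≤ 2 * (Module.finrank ℝ V + 1) *
      #{a ∈ (univ : Finset ι).offDiag | (2 * (Module.finrank ℝ V + 2 : ℝ))⁻¹ * (m * (1 - m)) <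
        |studentKernel (y a.1) (y a.2) - m|} := by
  set s : ℝ := (Module.finrank ℝ V : ℝ)
  set κ : ℝ := (2 * (s + 2))⁻¹ with hκ
  set n : ℝ := (Fintype.card ι : ℝ) with hn
  have κ_nonneg : 0 ≤ κ := by positivity
  have κ_lt_one : κ < 1 := inv_lt_one_of_one_lt₀ (by linarith [(by positivity : 0 ≤ s)])
  have far_le : n ^ 2 / (s + 1) - n ≤
      #{a ∈ (univ : Finset ι).offDiag |
        κ * (m * (1 - m)) < |studentKernel (y a.1) (y a.2) - m|} := by
    refine (le_card_filter_lt_abs_dist_sq_sub (y := y) (D := (1 - m) / m) (θ := κ / (1 - κ))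
      (div_pos (sub_pos.2 hm1) hm) (div_nonneg κ_nonneg (sub_pos.2 κ_lt_one).le) ?_).trans
      (Nat.cast_le.2 (card_le_card (monotone_filter_right _ fun a _ far ↦ ?_)))
    · rw [mul_div_assoc', div_lt_one (sub_pos.2 κ_lt_one), lt_sub_iff_add_lt, ← add_one_mul, hκ,
        ← div_eq_mul_inv, div_lt_one (by positivity)]
      linarith [(by positivity : 0 ≤ s)]
    · contrapose! far
      exact abs_dist_sq_sub_le_of_abs_studentKernel_sub_le hm hm1 κ_nonneg κ_lt_one far
  have card_offDiag_le : (#(univ : Finset ι).offDiag : ℝ) ≤ n ^ 2 := by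
    rw [offDiag_card, card_univ, hn, sq]
    exact_mod_cast Nat.sub_le _ _
  have half_le : n ^ 2 ≤ 2 * (s + 1) * (n ^ 2 / (s + 1) - n) := by
    have hcard' : 2 * (s + 1) ≤ n := by
      simp only [s, n]
      exact_mod_cast hcard
    rw [mul_sub, mul_assoc 2, mul_div_cancel₀ _ (by positivity)]
    nlinarith [(by positivity : 0 ≤ n)]
  calc _ ≤ n ^ 2 := card_offDiag_le
    _ ≤ 2 * (s + 1) * (n ^ 2 / (s + 1) - n) := half_le
    _ ≤ _ := by gcongr

theorem sq_meanKernel_mul_one_sub_le (hι : (univ : Finset ι).offDiag.Nonempty)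
    (hcard : 2 * (Module.finrank ℝ V + 1) ≤ Fintype.card ι) :
    (meanKernel y * (1 - meanKernel y)) ^ 2 ≤ varianceConst (Module.finrank ℝ V) *
      𝔼 a ∈ univ.offDiag, (studentKernel (y a.1) (y a.2) - meanKernel y) ^ 2 := by
  set m := meanKernel y with hm_def
  rcases (meanKernel_le_one (y := y) hι).eq_or_lt with hm1 | hm1
  · rw [hm_def, hm1, sub_self, mul_zero, zero_pow two_ne_zero]
    exact mul_nonneg (varianceConst_nonneg _) (expect_nonneg fun _ _ ↦ sq_nonneg _)
  have hm : 0 < m := meanKernel_pos hι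
  have many := card_offDiag_le_card_filter_lt_abs_studentKernel_sub (y := y) hm hm1 hcard
  set s : ℝ := (Module.finrank ℝ V : ℝ) with hs
  set far := {a ∈ (univ : Finset ι).offDiag | (2 * (s + 2))⁻¹ * (m * (1 - m)) <
    |studentKernel (y a.1) (y a.2) - m|}
  have sum_ge : #far * ((2 * (s + 2))⁻¹ * (m * (1 - m))) ^ 2 ≤
      ∑ a ∈ univ.offDiag, (studentKernel (y a.1) (y a.2) - m) ^ 2 := by
    rw [← nsmul_eq_mul]
    refine (card_nsmul_le_sum _ _ _ fun a ha ↦ ?_).trans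
      (sum_le_sum_of_subset_of_nonneg (filter_subset _ _) fun _ _ _ ↦ sq_nonneg _)
    rw [← sq_abs (studentKernel _ _ - m)]
    exact pow_le_pow_left₀ (mul_nonneg (by positivity) (mul_nonneg hm.le (sub_pos.2 hm1).le))
      (mem_filter.1 ha).2.le 2
  rw [expect_eq_sum_div_card, mul_div_assoc', le_div_iff₀ (by exact_mod_cast hι.card_pos)]
  calc (m * (1 - m)) ^ 2 * #(univ : Finset ι).offDiag
      ≤ (m * (1 - m)) ^ 2 * (2 * (s + 1) * #far) := by gcongr
    _ = 8 * (s + 1) * (s + 2) ^ 2 * (#far * ((2 * (s + 2))⁻¹ * (m * (1 - m))) ^ 2) := by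
        have : s + 2 ≠ 0 := by positivity
        field_simp
        ring
    _ ≤ _ := mul_le_mul_of_nonneg_left sum_ge (by positivity)

theorem inv_meanKernel_le (hp : IsNearUniformOn univ.offDiag p η)
    (hcard : 2 * (Module.finrank ℝ V + 1) ≤ Fintype.card ι)
    (hη : 16 * (varianceConst (Module.finrank ℝ V) * η) ≤ 1)
    (hmin : ∀ y' : ι → V, tsneLoss p y ≤ tsneLoss p y') :
    (meanKernel y)⁻¹ ≤ 1 + 2 * (varianceConst (Module.finrank ℝ V) * η) := by
  set A := varianceConst (Module.finrank ℝ V) * η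
  set m := meanKernel y
  have hm : 0 < m := meanKernel_pos hp.nonempty
  have hm1 : m ≤ 1 := meanKernel_le_one hp.nonempty
  have sandwich : (m * (1 - m)) ^ 2 ≤ A * (m * min m (1 - m)) :=
    (sq_meanKernel_mul_one_sub_le hp.nonempty hcard).trans <|
      (mul_le_mul_of_nonneg_left (expect_sq_studentKernel_sub_meanKernel_le hp hmin)
        (varianceConst_nonneg _)).trans_eq (mul_assoc _ _ _).symm
  have A_nonneg : 0 ≤ A := mul_nonneg (varianceConst_nonneg _) hp.nonneg
  have one_sub_sq_le : (1 - m) ^ 2 ≤ A := by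
    have : m ^ 2 * (1 - m) ^ 2 ≤ m ^ 2 * A := by
      nlinarith [min_le_left m (1 - m), mul_nonneg A_nonneg hm.le]
    exact le_of_mul_le_mul_left this (by positivity)
  have mean_ge : 3 / 4 ≤ m := by nlinarith
  have mul_one_sub_le : m * (1 - m) ≤ A := by
    rcases hm1.eq_or_lt with h | h
    · simpa [h] using A_nonneg
    have h' : 0 < m * (1 - m) := mul_pos hm (sub_pos.2 h)
    nlinarith [min_le_right m (1 - m), mul_nonneg A_nonneg hm.le]
  rw [inv_le_iff_one_le_mul₀ hm]
  nlinarith [mul_nonneg A_nonneg (sub_nonneg.2 mean_ge)]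

end Dimension

section Concentration

variable [PseudoMetricSpace E] {y : ι → E} {β b r : ℝ}

theorem expect_neg_log_studentKernel_le (hp : IsNearUniformOn univ.offDiag p η) (hη : η ≤ 1 / 2)
    (hβ : (meanKernel y)⁻¹ ≤ 1 + β) (hmin : ∀ y' : ι → E, tsneLoss p y ≤ tsneLoss p y') :
    𝔼 a ∈ univ.offDiag, -Real.log (studentKernel (y a.1) (y a.2)) ≤ 2 * β := by
  obtain ⟨a₀, -⟩ := hp.nonempty
  have mean_pos : 0 < meanKernel y := meanKernel_pos hp.nonempty
  have card_pos : (0 : ℝ) < #(univ : Finset ι).offDiag := Nat.cast_pos.2 hp.nonempty.card_pos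
  have compare := hmin fun _ ↦ y a₀.1
  simp only [tsneLoss, sum_studentKernel_eq_card_mul_meanKernel (y := y), studentKernel_self,
    Real.log_one, mul_zero, sum_const_zero, sub_zero, sum_const, nsmul_eq_mul, mul_one,
    Real.log_mul card_pos.ne' mean_pos.ne'] at compare
  have cross_entropy_le :
      ∑ a ∈ univ.offDiag, p a * -Real.log (studentKernel (y a.1) (y a.2)) ≤ β := by
    have := Real.log_le_sub_one_of_pos (inv_pos.2 mean_pos)
    rw [Real.log_inv] at this
    simp only [mul_neg, sum_neg_distrib]
    linarith
  have near := (abs_le.1 (hp.abs_sum_mul_sub_expect_le fun a _ ↦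
    neg_log_studentKernel_nonneg (y a.1) (y a.2))).1
  have := mul_le_mul_of_nonneg_right hη (expect_nonneg (s := univ.offDiag) fun a _ ↦
    neg_log_studentKernel_nonneg (y a.1) (y a.2))
  linarith

theorem exists_sum_neg_log_studentKernel_le (hι : (univ : Finset ι).offDiag.Nonempty)
    (hb : 𝔼 a ∈ univ.offDiag, -Real.log (studentKernel (y a.1) (y a.2)) ≤ b) :
    ∃ i, ∑ j, -Real.log (studentKernel (y i) (y j)) ≤ Fintype.card ι * b := by
  obtain ⟨a₀, -⟩ := hι
  suffices ∑ i, ∑ j, -Real.log (studentKernel (y i) (y j)) ≤ ∑ _i : ι, Fintype.card ι * b by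
    obtain ⟨i, -, hi⟩ := exists_le_of_sum_le ⟨a₀.1, mem_univ _⟩ this
    exact ⟨i, hi⟩
  calc ∑ i, ∑ j, -Real.log (studentKernel (y i) (y j))
      = #(univ : Finset ι).offDiag * 𝔼 a ∈ univ.offDiag,
          -Real.log (studentKernel (y a.1) (y a.2)) := by
        rw [card_mul_expect, sum_offDiag_univ_of_diag_eq_zero
          (f := fun i j ↦ -Real.log (studentKernel (y i) (y j)))
          fun i ↦ by rw [studentKernel_self, Real.log_one, neg_zero]]
    _ ≤ Fintype.card ι * Fintype.card ι * b := by
        refine mul_le_mul ?_ hb (expect_nonneg fun a _ ↦ neg_log_studentKernel_nonneg _ _)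
          (by positivity)
        rw [offDiag_card, card_univ]
        exact_mod_cast Nat.sub_le _ _
    _ = ∑ _i : ι, Fintype.card ι * b := by rw [sum_const, card_univ, nsmul_eq_mul, mul_assoc]

theorem one_sub_mul_card_le_card_filter_mem_ball {c : E} (hr : 0 < r) (hr1 : r ≤ 1)
    (hbr : 2 * b ≤ r ^ 3)
    (hc : ∑ j, -Real.log (studentKernel c (y j)) ≤ Fintype.card ι * b) :
    (1 - r) * Fintype.card ι ≤ #{j | y j ∈ Metric.ball c r} := by
  have far_mul_le : #{j | y j ∉ Metric.ball c r} * (r ^ 2 / 2) ≤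
      ∑ j, -Real.log (studentKernel c (y j)) := by
    rw [← nsmul_eq_mul]
    refine (card_nsmul_le_sum _ _ _ fun j hj ↦ ?_).trans (sum_le_sum_of_subset_of_nonneg
      (filter_subset _ _) fun _ _ _ ↦ neg_log_studentKernel_nonneg _ _)
    have r_le : r ≤ dist c (y j) := by
      simpa only [mem_filter, mem_univ, true_and, Metric.mem_ball', not_lt] using hj
    exact (half_le_one_sub_studentKernel (sq_nonneg r) (pow_le_one₀ hr.le hr1)
      (pow_le_pow_left₀ hr.le r_le 2)).trans (one_sub_studentKernel_le_neg_log _ _)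
  have far_le : (#{j | y j ∉ Metric.ball c r} : ℝ) ≤ r * Fintype.card ι := by
    refine le_of_mul_le_mul_right ?_ (by positivity : 0 < r ^ 2 / 2)
    calc _ ≤ Fintype.card ι * b := far_mul_le.trans hc
      _ ≤ Fintype.card ι * (r ^ 3 / 2) := by gcongr; linarith
      _ = _ := by ring
  have card_add : (#{j | y j ∈ Metric.ball c r} : ℝ) + #{j | y j ∉ Metric.ball c r} =
      Fintype.card ι := by
    exact_mod_cast card_filter_add_card_filter_not (s := univ) fun j ↦ y j ∈ Metric.ball c r
  linarith

end Concentration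

section Displacement

variable {β r : ℝ}

theorem sum_mul_log_sub_log_le_of_forall_le [DecidableEq ι] [PseudoMetricSpace E] {y : ι → E}
    (hp : ∀ i j, p (i, j) = p (j, i)) (hι : (univ : Finset ι).offDiag.Nonempty)
    (hmin : ∀ y' : ι → E, tsneLoss p y ≤ tsneLoss p y') (k : ι) (z : E) :
    ∑ j ∈ univ.erase k, #(univ : Finset ι).offDiag * p (k, j) *
        (Real.log (studentKernel z (y j)) - Real.log (studentKernel (y k) (y j))) ≤
      (meanKernel y)⁻¹ *
        ∑ j ∈ univ.erase k, (studentKernel z (y j) - studentKernel (y k) (y j)) := by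
  set N : ℝ := ((#(univ : Finset ι).offDiag : ℕ) : ℝ)
  set y' := Function.update y k z
  have N_pos : 0 < N := Nat.cast_pos.2 hι.card_pos
  have mean_pos : 0 < meanKernel y := meanKernel_pos hι
  have sum_pos (u : ι → E) : 0 < ∑ a ∈ univ.offDiag, studentKernel (u a.1) (u a.2) :=
    Finset.sum_pos (fun _ _ ↦ studentKernel_pos _ _) hι
  have log_change := sum_offDiag_univ_update_sub (g := fun i j ↦ p (i, j)) hp
    (fun u v : E ↦ congrArg Real.log (studentKernel_comm u v)) y k z
  have sum_change := sum_offDiag_univ_update_sub (g := fun _ _ ↦ 1) (fun _ _ ↦ rfl)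
    (fun u v : E ↦ studentKernel_comm u v) y k z
  simp only [one_mul] at sum_change
  have log_sum_le := Real.log_le_sub_one_of_pos (div_pos (sum_pos y') (sum_pos y))
  rw [Real.log_div (sum_pos y').ne' (sum_pos y).ne', div_sub_one (sum_pos y).ne', sum_change,
    sum_studentKernel_eq_card_mul_meanKernel (y := y)] at log_sum_le
  have compare := hmin y'
  rw [tsneLoss, tsneLoss, sum_studentKernel_eq_card_mul_meanKernel (y := y)] at compare
  have log_le := log_change.symm.le.trans ((by linarith : _ ≤ _).trans log_sum_le)
  simp only [mul_assoc N, ← mul_sum]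
  rw [le_inv_mul_iff₀ mean_pos]
  rw [le_div_iff₀ (mul_pos N_pos mean_pos)] at log_le
  linarith

theorem sum_sq_one_sub_studentKernel_le [PseudoMetricSpace E] {y : ι → E}
    (hsymm : ∀ i j, p (i, j) = p (j, i)) (hp : IsNearUniformOn univ.offDiag p η)
    (hη : η ≤ 1 / 2) (hβ : (meanKernel y)⁻¹ ≤ 1 + β)
    (hmin : ∀ y' : ι → E, tsneLoss p y ≤ tsneLoss p y') (k : ι) (z : E) :
    ∑ j, (1 - studentKernel (y k) (y j)) ^ 2 ≤
      4 * (Fintype.card ι * (β + η)) + 6 * ∑ j, -Real.log (studentKernel z (y j)) := by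
  set u : ι → ℝ := fun j ↦ 1 - studentKernel (y k) (y j)
  set b : ι → ℝ := fun j ↦ -Real.log (studentKernel z (y j))
  have b_nonneg (j : ι) : 0 ≤ b j := neg_log_studentKernel_nonneg _ _
  have u_nonneg (j : ι) : 0 ≤ u j := sub_nonneg.2 (studentKernel_le_one _ _)
  have u_le_one (j : ι) : u j ≤ 1 := sub_le_self _ (studentKernel_pos _ _).le
  have β_nonneg : 0 ≤ β := by
    linarith [(one_le_inv₀ (meanKernel_pos hp.nonempty)).2 (meanKernel_le_one (y := y) hp.nonempty)]
  have term_ge (j : ι) (hj : j ∈ univ.erase k) : u j + u j ^ 2 / 4 - η - 3 / 2 * b j ≤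
      #(univ : Finset ι).offDiag * p (k, j) *
        (Real.log (studentKernel z (y j)) - Real.log (studentKernel (y k) (y j))) :=
    le_mul_log_sub_log_of_abs_sub_one_le (studentKernel_pos _ _) (studentKernel_le_one _ _)
      (studentKernel_pos _ _) (studentKernel_le_one _ _) (hp.abs_card_mul_sub_one_le (k, j)
        (mem_offDiag.2 ⟨mem_univ k, mem_univ j, (ne_of_mem_erase hj).symm⟩)) hη
  have gain_le : (meanKernel y)⁻¹ *
      ∑ j ∈ univ.erase k, (studentKernel z (y j) - studentKernel (y k) (y j)) ≤
        ∑ j ∈ univ.erase k, (u j + β) := by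
    rw [mul_sum]
    refine sum_le_sum fun j _ ↦ ?_
    calc _ ≤ (meanKernel y)⁻¹ * u j := by
          gcongr
          · exact inv_nonneg.2 (meanKernel_pos hp.nonempty).le
          · exact sub_le_sub_right (studentKernel_le_one z (y j)) _
      _ ≤ (1 + β) * u j := mul_le_mul_of_nonneg_right hβ (u_nonneg j)
      _ ≤ u j + β := by nlinarith [mul_le_mul_of_nonneg_left (u_le_one j) β_nonneg]
  have sum_le := (sum_le_sum term_ge).trans
    ((sum_mul_log_sub_log_le_of_forall_le hsymm hp.nonempty hmin k z).trans gain_le)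
  have u_self : u k = 0 := sub_eq_zero.2 (studentKernel_self (y k)).symm
  calc ∑ j, u j ^ 2 = ∑ j ∈ univ.erase k, u j ^ 2 :=
        (sum_erase _ (by rw [u_self, zero_pow two_ne_zero])).symm
    _ ≤ ∑ j ∈ univ.erase k, (4 * (β + η) + 6 * b j) := by
        simp only [sum_add_distrib, sum_sub_distrib, ← mul_sum, ← sum_div] at sum_le ⊢
        linarith
    _ ≤ ∑ j, (4 * (β + η) + 6 * b j) :=
        sum_le_univ_sum_of_nonneg fun j ↦ by linarith [b_nonneg j, hp.nonneg]
    _ = _ := by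
        rw [sum_add_distrib, sum_const, card_univ, nsmul_eq_mul, mul_left_comm, mul_sum]

theorem dist_le_two_mul_sqrt [PseudoMetricSpace E] {y : ι → E} {u v : E} (hr : 0 ≤ r)
    (hr1 : r ≤ 1) (h : ∑ j, (1 - studentKernel u (y j)) ^ 2 +
      ∑ j, (1 - studentKernel v (y j)) ^ 2 < Fintype.card ι * (r / 2) ^ 2) :
    dist u v ≤ 2 * √r := by
  have close {a b : E} (hab : (1 - studentKernel a b) ^ 2 < (r / 2) ^ 2) : dist a b ≤ √r := by
    refine Real.le_sqrt_of_sq_le (le_of_not_gt fun far ↦ hab.not_ge ?_)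
    exact pow_le_pow_left₀ (by positivity) (half_le_one_sub_studentKernel hr hr1 far.le) 2
  obtain ⟨j, -, hj⟩ : ∃ j ∈ univ, (1 - studentKernel u (y j)) ^ 2 +
      (1 - studentKernel v (y j)) ^ 2 < (r / 2) ^ 2 := by
    refine exists_lt_of_sum_lt ?_
    rwa [sum_add_distrib, sum_const, card_univ, nsmul_eq_mul]
  calc dist u v ≤ dist u (y j) + dist v (y j) := dist_triangle_right _ _ _
    _ ≤ √r + √r := add_le_add
        (close (by linarith [sq_nonneg (1 - studentKernel v (y j))]))
        (close (by linarith [sq_nonneg (1 - studentKernel u (y j))]))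
    _ = 2 * √r := (two_mul _).symm

end Displacement

theorem exists_card_filter_mem_ball_and_forall_mem_closedBall {V : Type*} [NormedAddCommGroup V]
    [InnerProductSpace ℝ V] [FiniteDimensional ℝ V] {y : ι → V} {r : ℝ}
    (hsymm : ∀ i j, p (i, j) = p (j, i)) (hp : IsNearUniformOn univ.offDiag p η)
    (hcard : 2 * (Module.finrank ℝ V + 1) ≤ Fintype.card ι) (hr : 0 < r) (hr1 : r < 1)
    (hη : 256 * (varianceConst (Module.finrank ℝ V) * η) ≤ r ^ 3)
    (hmin : ∀ y' : ι → V, tsneLoss p y ≤ tsneLoss p y') :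
    ∃ c, (1 - r) * Fintype.card ι ≤ #{i | y i ∈ Metric.ball c r} ∧
      ∀ i, y i ∈ Metric.closedBall c (2 * √r) := by
  set A := varianceConst (Module.finrank ℝ V) * η
  have η_nonneg : 0 ≤ η := hp.nonneg
  have η_le : 32 * η ≤ A := mul_le_mul_of_nonneg_right (thirtyTwo_le_varianceConst _) η_nonneg
  have r_cube_le : r ^ 3 ≤ r ^ 2 := pow_le_pow_of_le_one hr.le hr1.le (by norm_num)
  have r_sq_le : r ^ 2 ≤ 1 := pow_le_one₀ hr.le hr1.le
  have mean_inv_le : (meanKernel y)⁻¹ ≤ 1 + 2 * A :=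
    inv_meanKernel_le hp hcard (by linarith) hmin
  obtain ⟨i₀, center⟩ := exists_sum_neg_log_studentKernel_le hp.nonempty
    (expect_neg_log_studentKernel_le hp (by linarith) mean_inv_le hmin)
  refine ⟨y i₀, one_sub_mul_card_le_card_filter_mem_ball hr hr1.le (by linarith) center,
    fun k ↦ dist_le_two_mul_sqrt hr.le hr1.le (y := y) ?_⟩
  have sq_sum_le : ∑ j, (1 - studentKernel (y i₀) (y j)) ^ 2 ≤
      ∑ j, -Real.log (studentKernel (y i₀) (y j)) := sum_le_sum fun j _ ↦
    (pow_le_of_le_one (sub_nonneg.2 (studentKernel_le_one _ _))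
      (sub_le_self _ (studentKernel_pos _ _).le) two_ne_zero).trans
      (one_sub_studentKernel_le_neg_log _ _)
  have displacement :=
    sum_sq_one_sub_studentKernel_le hsymm hp (by linarith) mean_inv_le hmin k (y i₀)
  have card_pos : (0 : ℝ) < Fintype.card ι := Nat.cast_pos.2 (by omega)
  have coefficient_lt : 4 * (2 * A + η) + 7 * (2 * (2 * A)) < (r / 2) ^ 2 := by
    linarith [div_pow r 2 2, pow_pos hr 2]
  nlinarith [mul_lt_mul_of_pos_left coefficient_lt card_pos]

end TSNELoss

section InputOutput

theorem sum_sum_ite_lt_eq_half_sum_offDiag {ι : Type*} [Fintype ι] [LinearOrder ι] {h : ι → ι → ℝ}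
    (hsymm : ∀ i j, h i j = h j i) :
    ∑ i, ∑ j, (if i < j then h i j else 0) = (∑ a ∈ univ.offDiag, h a.1 a.2) / 2 := by
  have swap : ∑ i, ∑ j, (if j < i then h i j else 0) = ∑ i, ∑ j, if i < j then h i j else 0 :=
    sum_comm.trans (sum_congr rfl fun i _ ↦ sum_congr rfl fun j _ ↦ by rw [hsymm])
  have split (i : ι) : ∑ j ∈ univ.erase i, h i j =
      ∑ j, (if i < j then h i j else 0) + ∑ j, if j < i then h i j else 0 := by
    rw [← sum_add_distrib, ← sum_erase univ (a := i) (by simp)]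
    refine sum_congr rfl fun j hj ↦ ?_
    rcases (ne_of_mem_erase hj).lt_or_gt with hlt | hlt <;> simp [hlt, hlt.not_gt]
  rw [sum_offDiag_univ, sum_congr rfl fun i _ ↦ split i, sum_add_distrib, swap, add_self_div_two]

theorem Zsum_eq_half_sum_studentKernel {N s : ℕ} (y : Fin N → EuclideanSpace ℝ (Fin s)) :
    Zsum y = (∑ a ∈ univ.offDiag, studentKernel (y a.1) (y a.2)) / 2 := by
  simp only [Zsum, ← dist_eq_norm]
  exact sum_sum_ite_lt_eq_half_sum_offDiag fun i j ↦ studentKernel_comm (y i) (y j)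

theorem KLpairs_eq_half_sum_offDiag {N : ℕ} {p q : Fin N → Fin N → ℝ} (hp : ∀ i j, p i j = p j i)
    (hq : ∀ i j, q i j = q j i) :
    KLpairs p q = (∑ a ∈ univ.offDiag, p a.1 a.2 * Real.log (p a.1 a.2 / q a.1 a.2)) / 2 :=
  sum_sum_ite_lt_eq_half_sum_offDiag fun i j ↦ by rw [hp, hq]

theorem KLpairs_qmat_eq_add_tsneLoss {N s : ℕ} {p : Fin N → Fin N → ℝ}
    (hsymm : ∀ i j, p i j = p j i) (hsum : ∑ a ∈ univ.offDiag, p a.1 a.2 / 2 = 1)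
    (y : Fin N → EuclideanSpace ℝ (Fin s)) :
    KLpairs p (qmat y) = KLpairs p (fun _ _ ↦ 2) + tsneLoss (fun a ↦ p a.1 a.2 / 2) y := by
  have pairs_nonempty : (univ : Finset (Fin N)).offDiag.Nonempty :=
    nonempty_of_sum_ne_zero (hsum.trans_ne one_ne_zero)
  set S := ∑ a ∈ univ.offDiag, studentKernel (y a.1) (y a.2) with hS
  have S_pos : 0 < S := sum_pos (fun _ _ ↦ studentKernel_pos _ _) pairs_nonempty
  have qmat_eq (i j : Fin N) : qmat y i j = 2 * (studentKernel (y i) (y j) / S) := by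
    rw [qmat, ← dist_eq_norm, ← studentKernel, Zsum_eq_half_sum_studentKernel, ← hS]
    ring
  have term (i j : Fin N) : p i j * Real.log (p i j / qmat y i j) = p i j * Real.log (p i j / 2) +
      2 * (p i j / 2 * Real.log S - p i j / 2 * Real.log (studentKernel (y i) (y j))) := by
    rcases eq_or_ne (p i j) 0 with h0 | h0
    · simp only [h0, zero_mul, zero_div, sub_zero, mul_zero, add_zero]
    have kernel_pos : 0 < studentKernel (y i) (y j) := studentKernel_pos _ _
    rw [qmat_eq, ← div_div, Real.log_div (div_ne_zero h0 two_ne_zero)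
      (div_pos kernel_pos S_pos).ne', Real.log_div kernel_pos.ne' S_pos.ne']
    ring
  rw [KLpairs_eq_half_sum_offDiag hsymm fun i j ↦ by rw [qmat_eq, qmat_eq, studentKernel_comm],
    KLpairs_eq_half_sum_offDiag hsymm fun _ _ ↦ rfl, sum_congr rfl fun a _ ↦ term a.1 a.2,
    sum_add_distrib, ← mul_sum, sum_sub_distrib, ← sum_mul, hsum, tsneLoss, ← hS]
  ring

theorem card_mul_div_sum_mem_Icc {α : Type*} {T : Finset α} {f : α → ℝ} {l u : ℝ} (hl : 0 < l)
    (hf : ∀ a ∈ T, f a ∈ Set.Icc l u) {b : α} (hb : b ∈ T) :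
    #T * (f b / ∑ a ∈ T, f a) ∈ Set.Icc (l / u) (u / l) := by
  have hu : 0 < u := hl.trans_le ((hf b hb).1.trans (hf b hb).2)
  have le_sum : #T * l ≤ ∑ a ∈ T, f a := by
    simpa only [nsmul_eq_mul] using card_nsmul_le_sum T f l fun a ha ↦ (hf a ha).1
  have sum_le : ∑ a ∈ T, f a ≤ #T * u := by
    simpa only [nsmul_eq_mul] using sum_le_card_nsmul T f u fun a ha ↦ (hf a ha).2
  have card_pos : (0 : ℝ) < #T := Nat.cast_pos.2 (card_pos.2 ⟨b, hb⟩)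
  have sum_pos : 0 < ∑ a ∈ T, f a := (mul_pos card_pos hl).trans_le le_sum
  rw [mul_div_assoc', Set.mem_Icc, div_le_div_iff₀ hu sum_pos, div_le_div_iff₀ sum_pos hl]
  constructor
  · nlinarith [mul_le_mul (hf b hb).1 sum_le sum_pos.le (hl.le.trans (hf b hb).1)]
  · nlinarith [mul_le_mul (hf b hb).2 le_sum (by positivity) hu.le]

variable {N d : ℕ} {x : Fin N → EuclideanSpace ℝ (Fin d)} {τ : Fin N → ℝ} {D θ σ : ℝ} {i : Fin N}

theorem pmat_comm (x : Fin N → EuclideanSpace ℝ (Fin d)) (τ : Fin N → ℝ) (i j : Fin N) :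
    pmat x τ i j = pmat x τ j i := by
  rw [pmat, add_comm, pmat]

theorem sum_pcond (hN : 2 ≤ N) : ∑ j ∈ univ.erase i, pcond x τ i j = 1 := by
  have others : (univ.erase i).Nonempty := by
    rw [← card_pos, card_erase_of_mem (mem_univ i), card_univ, Fintype.card_fin]
    omega
  simp only [pcond, ← sum_div]
  exact div_self (sum_pos (fun _ _ ↦ Real.exp_pos _) others).ne'

theorem sum_pmat_div_two (hN : 2 ≤ N) : ∑ a ∈ univ.offDiag, pmat x τ a.1 a.2 / 2 = 1 := by
  have rows : ∑ a ∈ univ.offDiag, pcond x τ a.1 a.2 = N := by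
    simp [sum_offDiag_univ, sum_pcond hN]
  have columns : ∑ a ∈ univ.offDiag, pcond x τ a.2 a.1 = N := by
    rw [← rows]
    exact sum_equiv (Equiv.prodComm _ _) (by simp [eq_comm]) fun _ _ ↦ rfl
  have N_ne : (N : ℝ) ≠ 0 := by positivity
  simp only [pmat, ← sum_div, sum_add_distrib, rows, columns]
  rw [← two_mul, mul_div_cancel_right₀ _ N_ne, div_self two_ne_zero]

theorem card_sub_one_mul_pcond_mem_Icc (hτ : τ i ≠ 0)
    (hx : ∀ k, k ≠ i → |‖x i - x k‖ ^ 2 - D| ≤ θ) {j : Fin N} (hij : j ≠ i) :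
    (N - 1) * pcond x τ i j ∈ Set.Icc (Real.exp (-(θ / τ i ^ 2))) (Real.exp (θ / τ i ^ 2)) := by
  have weight_mem (k : Fin N) (hk : k ∈ univ.erase i) :
      Real.exp (-‖x i - x k‖ ^ 2 / (2 * τ i ^ 2)) ∈
        Set.Icc (Real.exp (-(D + θ) / (2 * τ i ^ 2))) (Real.exp (-(D - θ) / (2 * τ i ^ 2))) := by
    obtain ⟨ge, le⟩ := abs_le.1 (hx k (ne_of_mem_erase hk))
    constructor <;> gcongr <;> linarith
  have mem := card_mul_div_sum_mem_Icc (Real.exp_pos _) weight_mem (mem_erase.2 ⟨hij, mem_univ j⟩)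
  have low : -(D + θ) / (2 * τ i ^ 2) - -(D - θ) / (2 * τ i ^ 2) = -(θ / τ i ^ 2) := by
    field_simp
    ring
  have high : -(D - θ) / (2 * τ i ^ 2) - -(D + θ) / (2 * τ i ^ 2) = θ / τ i ^ 2 := by
    field_simp
    ring
  rwa [← Real.exp_sub, ← Real.exp_sub, low, high, card_erase_of_mem (mem_univ i), card_univ,
    Fintype.card_fin, Nat.cast_pred i.pos] at mem

theorem isNearUniformOn_pmat_div_two (hN : 2 ≤ N) (hσ : 0 < σ) (hτ : ∀ i, σ ≤ τ i)
    (hθσ : θ ≤ σ ^ 2) (hx : Pairwise fun i j ↦ |‖x i - x j‖ ^ 2 - D| ≤ θ) :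
    IsNearUniformOn univ.offDiag (fun a ↦ pmat x τ a.1 a.2 / 2) (2 * (θ / σ ^ 2)) where
  sum_eq_one := sum_pmat_div_two hN
  abs_card_mul_sub_one_le := by
    rintro ⟨i, j⟩ ha
    have hij : i ≠ j := (mem_offDiag.1 ha).2.2
    have θ_nonneg : 0 ≤ θ := (abs_nonneg _).trans (hx hij)
    have pcond_mem {i j : Fin N} (hij : j ≠ i) :
        |(N - 1) * pcond x τ i j - 1| ≤ 2 * (θ / σ ^ 2) := by
      obtain ⟨ge, le⟩ := card_sub_one_mul_pcond_mem_Icc (hσ.trans_le (hτ i)).ne'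
        (fun k hk ↦ hx hk.symm) hij
      have ratio_le : θ / τ i ^ 2 ≤ θ / σ ^ 2 := by
        gcongr
        exact hτ i
      have ratio_nonneg : 0 ≤ θ / τ i ^ 2 := by positivity
      have ratio_le_one : θ / σ ^ 2 ≤ 1 := div_le_one_of_le₀ hθσ (sq_nonneg σ)
      have exp_le := (abs_le.1 (Real.abs_exp_sub_one_le
        ((abs_of_nonneg ratio_nonneg).trans_le (ratio_le.trans ratio_le_one)))).2
      rw [abs_of_nonneg ratio_nonneg] at exp_le
      rw [abs_le]
      constructor <;> linarith [Real.add_one_le_exp (-(θ / τ i ^ 2))]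
    have N_ne : (N : ℝ) ≠ 0 := by positivity
    have card_mul : #(univ : Finset (Fin N)).offDiag * (pmat x τ i j / 2) =
        ((N - 1) * pcond x τ j i + (N - 1) * pcond x τ i j) / 2 := by
      rw [offDiag_card, card_univ, Fintype.card_fin, Nat.cast_sub (Nat.le_mul_self N), pmat]
      push_cast
      field_simp
    have := abs_le.1 (pcond_mem hij)
    have := abs_le.1 (pcond_mem hij.symm)
    rw [card_mul, abs_le]
    constructor <;> linarith

end InputOutput

section SphericalCaps

variable {E : Type*} [NormedAddCommGroup E] [InnerProductSpace ℝ E] {ε : ℝ} {e : E}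

open scoped Pointwise in
theorem Ioo_smul_cap_subset_closedBall (hε : 0 ≤ ε) (hε1 : 2 * ε ^ 2 ≤ 1) (he : ‖e‖ = 1) :
    Set.Ioo (0 : ℝ) 1 • ((↑) '' {x : Metric.sphere (0 : E) 1 | ε < inner ℝ e (x : E)} : Set E) ⊆
      Metric.closedBall (ε • e) √(1 - ε ^ 2) := by
  rintro _ ⟨t, ⟨t_pos, t_lt_one⟩, _, ⟨x, hx, rfl⟩, rfl⟩
  rw [Metric.mem_closedBall, dist_eq_norm]
  refine Real.le_sqrt_of_sq_le ?_
  have inner_ge : t * (ε * ε) ≤ t * (ε * inner ℝ e (x : E)) := by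
    gcongr
    exact hx.le
  simp only [norm_sub_sq_real, norm_smul, norm_eq_of_mem_sphere, he, inner_smul_left,
    inner_smul_right, real_inner_comm, Real.norm_eq_abs, mul_one, sq_abs, conj_trivial]
  nlinarith [mul_nonneg (sub_nonneg.2 t_lt_one.le) (by linarith : 0 ≤ 1 + t - 2 * ε ^ 2)]

theorem sqrt_one_sub_sq_pow_le_exp (ε : ℝ) (d : ℕ) :
    √(1 - ε ^ 2) ^ d ≤ Real.exp (-(d * ε ^ 2 / 2)) := by
  have base_le : √(1 - ε ^ 2) ≤ Real.exp (-(ε ^ 2 / 2)) := by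
    refine Real.sqrt_le_iff.2 ⟨(Real.exp_pos _).le, ?_⟩
    rw [← Real.exp_nat_mul, Nat.cast_two, mul_neg, mul_div_cancel₀ _ two_ne_zero]
    exact Real.one_sub_le_exp_neg _
  calc √(1 - ε ^ 2) ^ d ≤ Real.exp (-(ε ^ 2 / 2)) ^ d := by gcongr
    _ = _ := by rw [← Real.exp_nat_mul, mul_neg, mul_div_assoc]

variable [FiniteDimensional ℝ E] [MeasurableSpace E] [BorelSpace E]

theorem toSphere_cap_le (μ : Measure E) [μ.IsAddHaarMeasure] (hε : 0 ≤ ε) (hε1 : 2 * ε ^ 2 ≤ 1)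
    (he : ‖e‖ = 1) :
    μ.toSphere {x | ε < inner ℝ e (x : E)} ≤
      ENNReal.ofReal (Real.exp (-(Module.finrank ℝ E * ε ^ 2 / 2))) * μ.toSphere Set.univ := by
  have measurable_cap : MeasurableSet {x : Metric.sphere (0 : E) 1 | ε < inner ℝ e (x : E)} :=
    (isOpen_lt continuous_const (by fun_prop)).measurableSet
  rw [Measure.toSphere_apply' _ measurable_cap, Measure.toSphere_apply_univ]
  calc _ ≤ Module.finrank ℝ E * μ (Metric.closedBall (ε • e) √(1 - ε ^ 2)) := by
        gcongr
        exact Ioo_smul_cap_subset_closedBall hε hε1 he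
    _ = ENNReal.ofReal (√(1 - ε ^ 2) ^ Module.finrank ℝ E) *
          (Module.finrank ℝ E * μ (Metric.ball 0 1)) := by
        rw [Measure.addHaar_closedBall _ _ (Real.sqrt_nonneg _), mul_left_comm]
    _ ≤ _ := by
        gcongr
        exact sqrt_one_sub_sq_pow_le_exp ε _

instance isProbabilityMeasure_sphereUniform (d : ℕ) [NeZero d] :
    IsProbabilityMeasure (sphereUniform d) := by
  have : Nonempty (Fin d) := ⟨0⟩
  exact ⟨ENNReal.inv_mul_cancel (Measure.measure_univ_ne_zero.2 (Measure.toSphere_ne_zero _))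
    (measure_ne_top _ _)⟩

theorem sphereUniform_setOf_lt_abs_inner_le {d : ℕ} [NeZero d] {e : EuclideanSpace ℝ (Fin d)}
    (hε : 0 ≤ ε) (hε1 : 2 * ε ^ 2 ≤ 1) (he : ‖e‖ = 1) :
    sphereUniform d {x | ε < |inner ℝ e (x : EuclideanSpace ℝ (Fin d))|} ≤
      2 * ENNReal.ofReal (Real.exp (-(d * ε ^ 2 / 2))) := by
  have cap_le {e : EuclideanSpace ℝ (Fin d)} (he : ‖e‖ = 1) :
      sphereUniform d {x | ε < inner ℝ e (x : EuclideanSpace ℝ (Fin d))} ≤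
        ENNReal.ofReal (Real.exp (-(d * ε ^ 2 / 2))) := by
    have toSphere_le := toSphere_cap_le volume hε hε1 he
    rw [finrank_euclideanSpace_fin] at toSphere_le
    calc _ ≤ ENNReal.ofReal (Real.exp (-(d * ε ^ 2 / 2))) * sphereUniform d Set.univ :=
          (mul_le_mul_right toSphere_le _).trans_eq (mul_left_comm _ _ _)
      _ = _ := by rw [measure_univ, mul_one]
  have split : {x : Metric.sphere (0 : EuclideanSpace ℝ (Fin d)) 1 | ε < |inner ℝ e x.1|} =
      {x | ε < inner ℝ e x.1} ∪ {x | ε < inner ℝ (-e) x.1} := by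
    ext x
    simp only [Set.mem_ofPred_eq, Set.mem_union, inner_neg_left, lt_abs]
  rw [split, two_mul]
  exact (measure_union_le _ _).trans (add_le_add (cap_le he) (cap_le ((norm_neg e).trans he)))

end SphericalCaps

section PairEvents

variable {ι α : Type*} [Fintype ι] [MeasurableSpace α] {μ : Measure α} [IsProbabilityMeasure μ]
  {S : Set (α × α)} {C : ENNReal}

theorem map_pi_prodMk_eval {i j : ι} (hij : i ≠ j) :
    (Measure.pi fun _ : ι ↦ μ).map (fun x ↦ (x i, x j)) = μ.prod μ := by
  have indep := (ProbabilityTheory.iIndepFun_pi (μ := fun _ : ι ↦ μ) (X := fun _ a ↦ a)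
    fun _ ↦ aemeasurable_id).indepFun hij
  rw [(ProbabilityTheory.indepFun_iff_map_prod_eq_prod_map_map
    (measurable_pi_apply i).aemeasurable (measurable_pi_apply j).aemeasurable).1 indep,
    (measurePreserving_eval _ i).map_eq, (measurePreserving_eval _ j).map_eq]

theorem pi_setOf_prodMk_mem_le (hS : MeasurableSet S) (hC : ∀ a, μ (Prod.mk a ⁻¹' S) ≤ C) {i j : ι}
    (hij : i ≠ j) : Measure.pi (fun _ : ι ↦ μ) {x | (x i, x j) ∈ S} ≤ C := by
  have measurable_pair : Measurable fun x : ι → α ↦ (x i, x j) :=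
    (measurable_pi_apply i).prodMk (measurable_pi_apply j)
  calc _ = μ.prod μ S := by rw [← map_pi_prodMk_eval hij, Measure.map_apply measurable_pair hS]; rfl
    _ = ∫⁻ a, μ (Prod.mk a ⁻¹' S) ∂μ := Measure.prod_apply hS
    _ ≤ ∫⁻ _, C ∂μ := lintegral_mono hC
    _ = C := by rw [lintegral_const, measure_univ, mul_one]

theorem one_sub_le_pi_setOf_pairwise_notMem (hS : MeasurableSet S)
    (hC : ∀ a, μ (Prod.mk a ⁻¹' S) ≤ C) :
    1 - Fintype.card ι ^ 2 * C ≤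
      Measure.pi (fun _ : ι ↦ μ) {x | Pairwise fun i j ↦ (x i, x j) ∉ S} := by
  set good := {x : ι → α | Pairwise fun i j ↦ (x i, x j) ∉ S}
  have bad_subset : goodᶜ ⊆ ⋃ a ∈ univ.offDiag, {x : ι → α | (x a.1, x a.2) ∈ S} := by
    intro x hx
    simp only [good, Pairwise, Set.mem_compl_iff, Set.mem_ofPred_eq, not_forall, not_not] at hx
    obtain ⟨i, j, hij, mem⟩ := hx
    exact Set.mem_iUnion₂.2 ⟨(i, j), mem_offDiag.2 ⟨mem_univ i, mem_univ j, hij⟩, mem⟩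
  have bad_le : Measure.pi (fun _ ↦ μ) goodᶜ ≤ Fintype.card ι ^ 2 * C := by
    calc _ ≤ ∑ a ∈ univ.offDiag, Measure.pi (fun _ ↦ μ) {x : ι → α | (x a.1, x a.2) ∈ S} :=
          (measure_mono bad_subset).trans (measure_biUnion_finset_le _ _)
      _ ≤ #(univ : Finset ι).offDiag • C := sum_le_card_nsmul _ _ _ fun a ha ↦
          pi_setOf_prodMk_mem_le hS hC (mem_offDiag.1 ha).2.2
      _ ≤ _ := by
          rw [nsmul_eq_mul, offDiag_card, card_univ, sq]
          gcongr
          exact_mod_cast Nat.sub_le _ _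
  rw [tsub_le_iff_right, ← measure_univ (μ := Measure.pi fun _ : ι ↦ μ)]
  exact (measure_univ_le_add_compl good).trans (add_le_add_right bad_le _)

end PairEvents

theorem ofReal_one_sub_le_pi_sphereUniform {n d : ℕ} [NeZero d] {ε : ℝ} (hε : 0 ≤ ε)
    (hε1 : 2 * ε ^ 2 ≤ 1) :
    ENNReal.ofReal (1 - n ^ 2 * (2 * Real.exp (-(d * ε ^ 2 / 2)))) ≤
      Measure.pi (fun _ : Fin n ↦ sphereUniform d) {x | Pairwise fun i j ↦
        |inner ℝ (x i : EuclideanSpace ℝ (Fin d)) (x j : EuclideanSpace ℝ (Fin d))| ≤ ε} := by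
  set far : Set (Metric.sphere (0 : EuclideanSpace ℝ (Fin d)) 1 ×
      Metric.sphere (0 : EuclideanSpace ℝ (Fin d)) 1) :=
    {a | ε < |inner ℝ (a.1 : EuclideanSpace ℝ (Fin d)) (a.2 : EuclideanSpace ℝ (Fin d))|}
  have measurable_far : MeasurableSet far :=
    (isOpen_lt continuous_const (by fun_prop)).measurableSet
  have far_le (a : Metric.sphere (0 : EuclideanSpace ℝ (Fin d)) 1) :
      sphereUniform d (Prod.mk a ⁻¹' far) ≤ 2 * ENNReal.ofReal (Real.exp (-(d * ε ^ 2 / 2))) :=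
    sphereUniform_setOf_lt_abs_inner_le (e := (a : EuclideanSpace ℝ (Fin d))) hε hε1
      (norm_eq_of_mem_sphere a)
  have card_le := one_sub_le_pi_setOf_pairwise_notMem (ι := Fin n) measurable_far far_le
  rw [Fintype.card_fin] at card_le
  have bound_eq : ENNReal.ofReal (1 - n ^ 2 * (2 * Real.exp (-(d * ε ^ 2 / 2)))) =
      1 - n ^ 2 * (2 * ENNReal.ofReal (Real.exp (-(d * ε ^ 2 / 2)))) := by
    rw [ENNReal.ofReal_sub _ (by positivity), ENNReal.ofReal_mul (by positivity),
      ENNReal.ofReal_mul zero_le_two, ENNReal.ofReal_pow (by positivity), ENNReal.ofReal_natCast,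
      ENNReal.ofReal_one, ENNReal.ofReal_ofNat]
  rw [bound_eq]
  exact card_le.trans (measure_mono fun x hx i j hij ↦ not_lt.1 (hx hij))

section Rates

theorem natCast_mul_rpow_sub_half_sq {d : ℕ} (hd : d ≠ 0) (δ : ℝ) :
    d * ((d : ℝ) ^ (δ - 1 / 2)) ^ 2 = (d : ℝ) ^ (2 * δ) := by
  have d_pos : (0 : ℝ) < d := Nat.cast_pos.2 hd.bot_lt
  rw [← Real.rpow_mul_natCast d_pos.le, Nat.cast_two,
    show 2 * δ = 1 + (δ - 1 / 2) * 2 by ring, Real.rpow_add d_pos, Real.rpow_one]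

theorem eventually_mul_rpow_le_pow_three {r : ℕ → ℝ} {δ : ℝ}
    (hrd : Tendsto (fun d : ℕ ↦ r d * (d : ℝ) ^ ((1 / 6 : ℝ) - δ / 3)) atTop atTop) (M : ℝ) :
    ∀ᶠ d : ℕ in atTop, M * (d : ℝ) ^ (δ - 1 / 2) ≤ r d ^ 3 := by
  have cube_tendsto := (tendsto_pow_atTop three_ne_zero).comp hrd
  filter_upwards [cube_tendsto.eventually_ge_atTop M, eventually_gt_atTop 0] with d M_le d_pos
  have cube_mul_eq_one : ((d : ℝ) ^ ((1 / 6 : ℝ) - δ / 3)) ^ 3 * (d : ℝ) ^ (δ - 1 / 2) = 1 := by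
    rw [← Real.rpow_mul_natCast d.cast_nonneg, ← Real.rpow_add (Nat.cast_pos.2 d_pos),
      Nat.cast_ofNat, show (1 / 6 - δ / 3) * 3 + (δ - 1 / 2) = 0 by ring, Real.rpow_zero]
  calc M * (d : ℝ) ^ (δ - 1 / 2)
      ≤ (r d * (d : ℝ) ^ ((1 / 6 : ℝ) - δ / 3)) ^ 3 * (d : ℝ) ^ (δ - 1 / 2) := by
        gcongr
        exact M_le
    _ = r d ^ 3 := by rw [mul_pow, mul_assoc, cube_mul_eq_one, mul_one]

theorem natCeil_exp_sq_mul_exp_neg_le {X : ℝ} (hX : 8 ≤ Real.exp (1 / 8 * X)) :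
    (⌈Real.exp (1 / 8 * X)⌉₊ : ℝ) ^ 2 * (2 * Real.exp (-(X / 2))) ≤ Real.exp (-(1 / 8 * X)) := by
  set u := Real.exp (1 / 8 * X) with hu
  have u_pos : 0 < u := Real.exp_pos _
  have ceil_le : (⌈u⌉₊ : ℝ) ≤ 2 * u := by
    linarith [Nat.ceil_lt_add_one u_pos.le]
  have exp_eq : Real.exp (-(X / 2)) = (u ^ 4)⁻¹ := by
    rw [hu, ← Real.exp_nat_mul, ← Real.exp_neg]
    congr 1
    push_cast
    ring
  rw [exp_eq, Real.exp_neg]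
  calc (⌈u⌉₊ : ℝ) ^ 2 * (2 * (u ^ 4)⁻¹) ≤ (2 * u) ^ 2 * (2 * (u ^ 4)⁻¹) := by gcongr
    _ = 8 / u * u⁻¹ := by field_simp; norm_num
    _ ≤ 1 * u⁻¹ := by
        gcongr
        exact (div_le_one u_pos).2 hX
    _ = u⁻¹ := one_mul _

end Rates

theorem abs_norm_sub_sq_sub_two_le {E : Type*} [NormedAddCommGroup E] [InnerProductSpace ℝ E]
    {x y : E} {ε : ℝ} (hx : ‖x‖ = 1) (hy : ‖y‖ = 1) (hxy : |inner ℝ x y| ≤ ε) :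
    |‖x - y‖ ^ 2 - 2| ≤ 2 * ε := by
  have norm_sub : ‖x - y‖ ^ 2 - 2 = -(2 * inner ℝ x y) := by
    rw [norm_sub_sq_real, hx, hy]
    ring
  rw [norm_sub, abs_neg, abs_mul, abs_two]
  gcongr

theorem exists_card_ball_and_closedBall_of_forall_KLpairs_le {N d s : ℕ}
    {x : Fin N → EuclideanSpace ℝ (Fin d)} {τ : Fin N → ℝ} {y : Fin N → EuclideanSpace ℝ (Fin s)}
    {σ θ D r : ℝ} (hσ : 0 < σ) (hτ : ∀ i, σ ≤ τ i) (hN : 2 * (s + 1) ≤ N) (hr : 0 < r) (hr1 : r < 1)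
    (hθ : 512 * varianceConst s / σ ^ 2 * θ ≤ r ^ 3)
    (hx : Pairwise fun i j ↦ |‖x i - x j‖ ^ 2 - D| ≤ θ)
    (hmin : ∀ y' : Fin N → EuclideanSpace ℝ (Fin s),
      KLpairs (pmat x τ) (qmat y) ≤ KLpairs (pmat x τ) (qmat y')) :
    ∃ c, (1 - r) * N ≤ #{i | y i ∈ Metric.ball c r} ∧
      ∀ i, y i ∈ Metric.closedBall c (2 * √r) := by
  have two_le : 2 ≤ N := by omega
  have θ_le : θ ≤ σ ^ 2 := by
    have const_ge : 1 ≤ 512 * varianceConst s := by linarith [thirtyTwo_le_varianceConst s]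
    by_contra! lt_θ
    refine (hθ.trans_lt (pow_lt_one₀ hr.le hr1 three_ne_zero)).not_ge ?_
    calc (1 : ℝ) ≤ 512 * varianceConst s / σ ^ 2 * σ ^ 2 := by
          rwa [div_mul_cancel₀ _ (by positivity)]
      _ ≤ 512 * varianceConst s / σ ^ 2 * θ := by gcongr
  have near_uniform := isNearUniformOn_pmat_div_two two_le hσ hτ θ_le hx
  have hmin' (y' : Fin N → EuclideanSpace ℝ (Fin s)) :
      tsneLoss (fun a ↦ pmat x τ a.1 a.2 / 2) y ≤ tsneLoss (fun a ↦ pmat x τ a.1 a.2 / 2) y' := by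
    have := hmin y'
    rwa [KLpairs_qmat_eq_add_tsneLoss (pmat_comm x τ) (sum_pmat_div_two two_le),
      KLpairs_qmat_eq_add_tsneLoss (pmat_comm x τ) (sum_pmat_div_two two_le),
      add_le_add_iff_left] at this
  have concentration := exists_card_filter_mem_ball_and_forall_mem_closedBall
    (fun i j ↦ by rw [pmat_comm]) near_uniform (by simpa using hN) hr hr1
    (by rw [finrank_euclideanSpace_fin]; exact le_of_eq_of_le (by ring) hθ) hmin'
  rwa [Fintype.card_fin] at concentration

theorem stmt14_general (s : ℕ) (σ : ℝ) (hσ : 0 < σ) (δ : ℝ) (hδ : 0 < δ)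
    (r : ℕ → ℝ) (hr : ∀ d, 0 < r d ∧ r d < 1)
    (hrd : Tendsto (fun d : ℕ ↦ r d * (d : ℝ) ^ ((1 / 6 : ℝ) - δ / 3)) atTop atTop) :
    ∃ c : ℝ, 0 < c ∧ ∃ c' : ℝ, 0 < c' ∧ ∃ C : ℝ, 0 < C ∧
      ∀ᶠ d : ℕ in atTop, ∀ n : ℕ, n = ⌈Real.exp (c * (d : ℝ) ^ (2 * δ))⌉₊ →
        ENNReal.ofReal (1 - Real.exp (-(c' * (d : ℝ) ^ (2 * δ)))) ≤
          Measure.pi (fun _ : Fin n ↦ sphereUniform d)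
            {x | ∀ τ : Fin n → ℝ, (∀ i, σ ≤ τ i) → ∀ y : Fin n → EuclideanSpace ℝ (Fin s),
              (∀ y' : Fin n → EuclideanSpace ℝ (Fin s),
                KLpairs (pmat (fun k ↦ (x k : EuclideanSpace ℝ (Fin d))) τ) (qmat y) ≤
                KLpairs (pmat (fun k ↦ (x k : EuclideanSpace ℝ (Fin d))) τ) (qmat y')) →
              (∃ c₀, (1 - r d) * n ≤ #{i | y i ∈ Metric.ball c₀ (r d)}) ∧
              ∃ c₀, ∀ i, y i ∈ Metric.closedBall c₀ (C * √(r d))} := by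
  refine ⟨1 / 8, by norm_num, 1 / 8, by norm_num, 2, by norm_num, ?_⟩
  have exp_tendsto : Tendsto (fun d : ℕ ↦ Real.exp (1 / 8 * (d : ℝ) ^ (2 * δ))) atTop atTop :=
    Real.tendsto_exp_atTop.comp (Tendsto.const_mul_atTop (by norm_num)
      ((tendsto_rpow_atTop (by linarith)).comp tendsto_natCast_atTop_atTop))
  filter_upwards [exp_tendsto.eventually_ge_atTop 8,
    exp_tendsto.eventually_ge_atTop (2 * (s + 1) : ℕ), eventually_ne_atTop 0,
    eventually_mul_rpow_le_pow_three hrd 2,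
    eventually_mul_rpow_le_pow_three hrd (512 * varianceConst s / σ ^ 2 * 2)]
    with d eight_le card_le d_ne_zero two_mul_ε_le hθ _ rfl
  have : NeZero d := ⟨d_ne_zero⟩
  set ε : ℝ := (d : ℝ) ^ (δ - 1 / 2) with hε
  have ε_nonneg : 0 ≤ ε := Real.rpow_nonneg d.cast_nonneg _
  have two_mul_ε_sq_le : 2 * ε ^ 2 ≤ 1 := by
    nlinarith [two_mul_ε_le.trans (pow_le_one₀ (hr d).1.le (hr d).2.le)]
  have card_le_ceil : 2 * (s + 1) ≤ ⌈Real.exp (1 / 8 * (d : ℝ) ^ (2 * δ))⌉₊ :=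
    Nat.cast_le.1 (card_le.trans (Nat.le_ceil _))
  have probability_le := ofReal_one_sub_le_pi_sphereUniform
    (n := ⌈Real.exp (1 / 8 * (d : ℝ) ^ (2 * δ))⌉₊) (d := d) ε_nonneg two_mul_ε_sq_le
  rw [hε, natCast_mul_rpow_sub_half_sq d_ne_zero] at probability_le
  have failure_le := natCeil_exp_sq_mul_exp_neg_le eight_le
  refine (ENNReal.ofReal_le_ofReal (sub_le_sub_left failure_le 1)).trans
    (probability_le.trans (measure_mono fun x hx τ hτ y hmin ↦ ?_))
  obtain ⟨c₀, ball, closedBall⟩ := exists_card_ball_and_closedBall_of_forall_KLpairs_le hσ hτ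
    card_le_ceil (hr d).1 (hr d).2 ((mul_assoc _ _ _).symm.trans_le hθ)
    (fun i j hij ↦ abs_norm_sub_sq_sub_two_le (by simp) (by simp) (hx hij)) hmin
  exact ⟨⟨c₀, ball⟩, c₀, closedBall⟩

/-- fix `σ > 0`, `δ ∈ (0,1/2)`, and `r = r(d) ∈ (0,1)` with
`r(d)·d^{1/6-δ/3} → ∞`. There are constants `c, c', C > 0` such that for all sufficiently
large `d`, taking `n = ⌈e^{c·d^{2δ}}⌉` i.i.d. uniform points on `S^{d-1}` and the t-SNE input
distribution `P` with all bandwidths `σ`, with probability at least `1 - e^{-c'·d^{2δ}}`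
every global minimizer of `D(P‖Q)` over `(ℝ²)^n` has at least `(1-r(d))·n` of its points in
some open ball of radius `r(d)` and all its points in some ball of radius `C·√r(d)`. -/
theorem stmt14 (σ : ℝ) (hσ : 0 < σ) (δ : ℝ) (hδ : 0 < δ) (hδ' : δ < 1 / 2)
    (r : ℕ → ℝ) (hr : ∀ d, 0 < r d ∧ r d < 1)
    (hrd : Tendsto (fun d : ℕ => r d * (d : ℝ) ^ ((1 / 6 : ℝ) - δ / 3)) atTop atTop) :
    ∃ c : ℝ, 0 < c ∧ ∃ c' : ℝ, 0 < c' ∧ ∃ C : ℝ, 0 < C ∧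
      ∀ᶠ d : ℕ in atTop, ∀ n : ℕ, n = ⌈Real.exp (c * (d : ℝ) ^ (2 * δ))⌉₊ →
        ENNReal.ofReal (1 - Real.exp (-(c' * (d : ℝ) ^ (2 * δ)))) ≤
          Measure.pi (fun _ : Fin n => sphereUniform d)
            {x : Fin n → Metric.sphere (0 : EuclideanSpace ℝ (Fin d)) 1 |
              ∀ y : Fin n → EuclideanSpace ℝ (Fin 2),
                (∀ y' : Fin n → EuclideanSpace ℝ (Fin 2),
                  KLpairs (pmat (fun k => (x k : EuclideanSpace ℝ (Fin d))) (fun _ => σ)) (qmat y) ≤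
                  KLpairs (pmat (fun k => (x k : EuclideanSpace ℝ (Fin d))) (fun _ => σ)) (qmat y')) →
                (∃ c₀ : EuclideanSpace ℝ (Fin 2),
                  (1 - r d) * n ≤
                    (Finset.univ.filter (fun i : Fin n => y i ∈ Metric.ball c₀ (r d))).card) ∧
                (∃ c₀ : EuclideanSpace ℝ (Fin 2),
                  ∀ i : Fin n, y i ∈ Metric.closedBall c₀ (C * Real.sqrt (r d)))} := by
  obtain ⟨c, hc, c', hc', C, hC, general⟩ := stmt14_general 2 σ hσ δ hδ r hr hrd
  exact ⟨c, hc, c', hc', C, hC, general.mono fun d hd n hn ↦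
    (hd n hn).trans (measure_mono fun x hx y hy ↦ hx _ (fun _ ↦ le_rfl) y hy)⟩

end
end
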